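/- Let SC₂ be the second-order comprehension schema and SC₁ = { F* : F ∈ SC₂ } its first-order encoding. Then every formula in the decoded set (SC₁)ᵒ is intuitionistically second-order provably equivalent to a formula of SC₂, and conversely; in particular every formula of (SC₁)ᵒ is provable in second-order intuitionistic logic. -/

import Mathlib

namespace SOL

/-! ### Syntax: terms, first-order formulas, second-order formulas -/

/-- First-order terms over a set `F` of function/constant symbols. -/
inductive Tm (F : Type) : Type
  | var : ℕ → Tm F
  | func : F → List (Tm F) → Tm F

mutual
/-- Free variables of a term. -/
def fvT {F : Type} : Tm F → Finset ℕ
  | .var x => {x}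
  | .func _ ts => fvTs ts
def fvTs {F : Type} : List (Tm F) → Finset ℕ
  | [] => ∅
  | t :: ts => fvT t ∪ fvTs ts
end

mutual
/-- Simultaneous substitution in a term. -/
def substT {F : Type} (σ : ℕ → Tm F) : Tm F → Tm F
  | .var x => σ x
  | .func f ts => .func f (substTs σ ts)
def substTs {F : Type} (σ : ℕ → Tm F) : List (Tm F) → List (Tm F)
  | [] => []
  | t :: ts => substT σ t :: substTs σ ts
end

/-- A variable fresh for the finite set `s`. -/
def fresh (s : Finset ℕ) : ℕ := s.sup id + 1

/-- The variables occurring in the `σ`-images of members of `s`. -/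
def sImg {F : Type} (σ : ℕ → Tm F) (s : Finset ℕ) : Finset ℕ :=
  s.biUnion fun z => fvT (σ z)

/-- First-order formulas over function symbols `F` and relation symbols `R`. -/
inductive Fm1 (F R : Type) : Type
  | bot
  | rel (r : R) (ts : List (Tm F))
  | imp (A B : Fm1 F R)
  | conj (A B : Fm1 F R)
  | disj (A B : Fm1 F R)
  | all (x : ℕ) (A : Fm1 F R)
  | ex (x : ℕ) (A : Fm1 F R)

/-- Free (first-order) variables of a first-order formula. -/
def fv1 {F R : Type} : Fm1 F R → Finset ℕ
  | .bot => ∅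
  | .rel _ ts => fvTs ts
  | .imp A B => fv1 A ∪ fv1 B
  | .conj A B => fv1 A ∪ fv1 B
  | .disj A B => fv1 A ∪ fv1 B
  | .all x A => (fv1 A).erase x
  | .ex x A => (fv1 A).erase x

/-- Capture-avoiding simultaneous substitution in a first-order formula
(bound variables are renamed to fresh ones). -/
def subst1 {F R : Type} : (ℕ → Tm F) → Fm1 F R → Fm1 F R
  | σ, .bot => .bot
  | σ, .rel r ts => .rel r (substTs σ ts)
  | σ, .imp A B => .imp (subst1 σ A) (subst1 σ B)
  | σ, .conj A B => .conj (subst1 σ A) (subst1 σ B)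
  | σ, .disj A B => .disj (subst1 σ A) (subst1 σ B)
  | σ, .all x A =>
      let y := fresh (sImg σ (fv1 A))
      .all y (subst1 (Function.update σ x (.var y)) A)
  | σ, .ex x A =>
      let y := fresh (sImg σ (fv1 A))
      .ex y (subst1 (Function.update σ x (.var y)) A)

/-- Second-order formulas over function symbols `F`.  `rel n X ts` is the
atomic formula `Xⁿ(ts)` where `X` is the name of a second-order variable of
arity `n`. `all1/ex1` are first-order quantifiers, `all2 n X` and `ex2 n X`
quantify over the second-order variable `Xⁿ`. -/
inductive Fm2 (F : Type) : Type
  | bot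
  | rel (n X : ℕ) (ts : List (Tm F))
  | imp (A B : Fm2 F)
  | conj (A B : Fm2 F)
  | disj (A B : Fm2 F)
  | all1 (x : ℕ) (A : Fm2 F)
  | ex1 (x : ℕ) (A : Fm2 F)
  | all2 (n X : ℕ) (A : Fm2 F)
  | ex2 (n X : ℕ) (A : Fm2 F)

/-- Free first-order variables of a second-order formula. -/
def fvo {F : Type} : Fm2 F → Finset ℕ
  | .bot => ∅
  | .rel _ _ ts => fvTs ts
  | .imp A B => fvo A ∪ fvo B
  | .conj A B => fvo A ∪ fvo B
  | .disj A B => fvo A ∪ fvo B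
  | .all1 x A => (fvo A).erase x
  | .ex1 x A => (fvo A).erase x
  | .all2 _ _ A => fvo A
  | .ex2 _ _ A => fvo A

/-- Free second-order variables (as pairs (arity, name)). -/
def fvs {F : Type} : Fm2 F → Finset (ℕ × ℕ)
  | .bot => ∅
  | .rel n X _ => {(n, X)}
  | .imp A B => fvs A ∪ fvs B
  | .conj A B => fvs A ∪ fvs B
  | .disj A B => fvs A ∪ fvs B
  | .all1 _ A => fvs A
  | .ex1 _ A => fvs A
  | .all2 n X A => (fvs A).erase (n, X)
  | .ex2 n X A => (fvs A).erase (n, X)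

/-- Update an arity-indexed family at one point. -/
def upd2 {α : Type*} (σ : ℕ → ℕ → α) (n X : ℕ) (v : α) : ℕ → ℕ → α :=
  fun m Y => if m = n ∧ Y = X then v else σ m Y

/-- The identity renaming of second-order variables. -/
def ρid : ℕ → ℕ → ℕ := fun _ Y => Y

/-- Capture-avoiding simultaneous first-order substitution `σ` combined with a
simultaneous renaming `ρ` of second-order variables, on second-order formulas. -/
def rnSub {F : Type} : (ℕ → Tm F) → (ℕ → ℕ → ℕ) → Fm2 F → Fm2 F
  | σ, _, .bot => .bot
  | σ, ρ, .rel n X ts => .rel n (ρ n X) (substTs σ ts)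
  | σ, ρ, .imp A B => .imp (rnSub σ ρ A) (rnSub σ ρ B)
  | σ, ρ, .conj A B => .conj (rnSub σ ρ A) (rnSub σ ρ B)
  | σ, ρ, .disj A B => .disj (rnSub σ ρ A) (rnSub σ ρ B)
  | σ, ρ, .all1 x A =>
      let y := fresh (sImg σ (fvo A))
      .all1 y (rnSub (Function.update σ x (.var y)) ρ A)
  | σ, ρ, .ex1 x A =>
      let y := fresh (sImg σ (fvo A))
      .ex1 y (rnSub (Function.update σ x (.var y)) ρ A)
  | σ, ρ, .all2 n X A =>
      let Y := fresh ((fvs A).image fun p => ρ p.1 p.2)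
      .all2 n Y (rnSub σ (upd2 ρ n X Y) A)
  | σ, ρ, .ex2 n X A =>
      let Y := fresh ((fvs A).image fun p => ρ p.1 p.2)
      .ex2 n Y (rnSub σ (upd2 ρ n X Y) A)

/-- The simultaneous substitution sending the parameters `ps` to the terms `ts`
(pointwise) and every other variable to itself. -/
def mkσ {F : Type} (ps : List ℕ) (ts : List (Tm F)) : ℕ → Tm F :=
  fun z => (List.lookup z (ps.zip ts)).getD (.var z)

/-- Capture-avoiding substitution of the comprehension "term" `λ ps. G` for the
second-order variable `Xⁿ` (combined with an auxiliary first-order substitution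
`σ` and second-order renaming `ρ`). -/
def cSub {F : Type} (n X : ℕ) (ps : List ℕ) (G : Fm2 F) :
    (ℕ → Tm F) → (ℕ → ℕ → ℕ) → Fm2 F → Fm2 F
  | σ, ρ, .bot => .bot
  | σ, ρ, .rel m Y ts =>
      if m = n ∧ Y = X then rnSub (mkσ ps (substTs σ ts)) ρid G
      else .rel m (ρ m Y) (substTs σ ts)
  | σ, ρ, .imp A B => .imp (cSub n X ps G σ ρ A) (cSub n X ps G σ ρ B)
  | σ, ρ, .conj A B => .conj (cSub n X ps G σ ρ A) (cSub n X ps G σ ρ B)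
  | σ, ρ, .disj A B => .disj (cSub n X ps G σ ρ A) (cSub n X ps G σ ρ B)
  | σ, ρ, .all1 x A =>
      let y := fresh (sImg σ (fvo A) ∪ fvo G)
      .all1 y (cSub n X ps G (Function.update σ x (.var y)) ρ A)
  | σ, ρ, .ex1 x A =>
      let y := fresh (sImg σ (fvo A) ∪ fvo G)
      .ex1 y (cSub n X ps G (Function.update σ x (.var y)) ρ A)
  | σ, ρ, .all2 m Y A =>
      let Y' := fresh (((fvs A).image fun p => ρ p.1 p.2) ∪ (fvs G).image Prod.snd)
      if m = n ∧ Y = X then .all2 m Y' (rnSub σ (upd2 ρ m Y Y') A)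
      else .all2 m Y' (cSub n X ps G σ (upd2 ρ m Y Y') A)
  | σ, ρ, .ex2 m Y A =>
      let Y' := fresh (((fvs A).image fun p => ρ p.1 p.2) ∪ (fvs G).image Prod.snd)
      if m = n ∧ Y = X then .ex2 m Y' (rnSub σ (upd2 ρ m Y Y') A)
      else .ex2 m Y' (cSub n X ps G σ (upd2 ρ m Y Y') A)

/-- Renaming of first-order variables in a second-order formula. -/
def rename1 {F : Type} (r : ℕ → ℕ) : Fm2 F → Fm2 F :=
  rnSub (fun z => .var (r z)) ρid

/-- Renaming the second-order variable `Xⁿ` to `Yⁿ`. -/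
def rename2 {F : Type} (n X Y : ℕ) : Fm2 F → Fm2 F :=
  rnSub Tm.var (upd2 ρid n X Y)

/-- Substitution of a single term for a first-order variable, `A[x := t]`. -/
def substO {F : Type} (x : ℕ) (t : Tm F) : Fm2 F → Fm2 F :=
  rnSub (Function.update Tm.var x t) ρid

/-- Second-order substitution `A[Xⁿ := λ ps. G]`. -/
def substS {F : Type} (n X : ℕ) (ps : List ℕ) (G : Fm2 F) : Fm2 F → Fm2 F :=
  cSub n X ps G Tm.var ρid

/-- `A ↔ B` in the second-order language. -/
def iff2 {F : Type} (A B : Fm2 F) : Fm2 F := .conj (.imp A B) (.imp B A)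

/-! ### Natural deduction -/

/-- Natural deduction for first-order logic; the `Bool` flag is `false` for
intuitionistic, `true` for classical logic (which adds reductio ad absurdum). -/
inductive Prf1 {F R : Type} : Bool → List (Fm1 F R) → Fm1 F R → Prop
  | ax {k Γ A} : A ∈ Γ → Prf1 k Γ A
  | botE {k Γ A} : Prf1 k Γ .bot → Prf1 k Γ A
  | raa {Γ A} : Prf1 true (.imp A .bot :: Γ) .bot → Prf1 true Γ A
  | impI {k Γ A B} : Prf1 k (A :: Γ) B → Prf1 k Γ (.imp A B)
  | impE {k Γ A B} : Prf1 k Γ (.imp A B) → Prf1 k Γ A → Prf1 k Γ B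
  | conjI {k Γ A B} : Prf1 k Γ A → Prf1 k Γ B → Prf1 k Γ (.conj A B)
  | conjE1 {k Γ A B} : Prf1 k Γ (.conj A B) → Prf1 k Γ A
  | conjE2 {k Γ A B} : Prf1 k Γ (.conj A B) → Prf1 k Γ B
  | disjI1 {k Γ A B} : Prf1 k Γ A → Prf1 k Γ (.disj A B)
  | disjI2 {k Γ A B} : Prf1 k Γ B → Prf1 k Γ (.disj A B)
  | disjE {k Γ A B C} : Prf1 k Γ (.disj A B) → Prf1 k (A :: Γ) C → Prf1 k (B :: Γ) C →
      Prf1 k Γ C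
  | allI {k Γ x A} : Prf1 k Γ A → (∀ B ∈ Γ, x ∉ fv1 B) → Prf1 k Γ (.all x A)
  | allE {k Γ x A} (t : Tm F) : Prf1 k Γ (.all x A) →
      Prf1 k Γ (subst1 (Function.update Tm.var x t) A)
  | exI {k Γ x A} (t : Tm F) : Prf1 k Γ (subst1 (Function.update Tm.var x t) A) →
      Prf1 k Γ (.ex x A)
  | exE {k Γ x A C} : Prf1 k Γ (.ex x A) → Prf1 k (A :: Γ) C →
      x ∉ fv1 C → (∀ B ∈ Γ, x ∉ fv1 B) → Prf1 k Γ C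

/-- Natural deduction for second-order logic (`false` = intuitionistic,
`true` = classical), with impredicative comprehension built into the
second-order quantifier rules. -/
inductive Prf2 {F : Type} : Bool → List (Fm2 F) → Fm2 F → Prop
  | ax {k Γ A} : A ∈ Γ → Prf2 k Γ A
  | botE {k Γ A} : Prf2 k Γ .bot → Prf2 k Γ A
  | raa {Γ A} : Prf2 true (.imp A .bot :: Γ) .bot → Prf2 true Γ A
  | impI {k Γ A B} : Prf2 k (A :: Γ) B → Prf2 k Γ (.imp A B)
  | impE {k Γ A B} : Prf2 k Γ (.imp A B) → Prf2 k Γ A → Prf2 k Γ B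
  | conjI {k Γ A B} : Prf2 k Γ A → Prf2 k Γ B → Prf2 k Γ (.conj A B)
  | conjE1 {k Γ A B} : Prf2 k Γ (.conj A B) → Prf2 k Γ A
  | conjE2 {k Γ A B} : Prf2 k Γ (.conj A B) → Prf2 k Γ B
  | disjI1 {k Γ A B} : Prf2 k Γ A → Prf2 k Γ (.disj A B)
  | disjI2 {k Γ A B} : Prf2 k Γ B → Prf2 k Γ (.disj A B)
  | disjE {k Γ A B C} : Prf2 k Γ (.disj A B) → Prf2 k (A :: Γ) C → Prf2 k (B :: Γ) C →
      Prf2 k Γ C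
  | all1I {k Γ x A} : Prf2 k Γ A → (∀ B ∈ Γ, x ∉ fvo B) → Prf2 k Γ (.all1 x A)
  | all1E {k Γ x A} (t : Tm F) : Prf2 k Γ (.all1 x A) → Prf2 k Γ (substO x t A)
  | ex1I {k Γ x A} (t : Tm F) : Prf2 k Γ (substO x t A) → Prf2 k Γ (.ex1 x A)
  | ex1E {k Γ x A C} : Prf2 k Γ (.ex1 x A) → Prf2 k (A :: Γ) C →
      x ∉ fvo C → (∀ B ∈ Γ, x ∉ fvo B) → Prf2 k Γ C
  | all2I {k Γ n X A} : Prf2 k Γ A → (∀ B ∈ Γ, (n, X) ∉ fvs B) → Prf2 k Γ (.all2 n X A)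
  | all2E {k Γ n X A} (ps : List ℕ) (G : Fm2 F) : ps.length = n → ps.Nodup →
      Prf2 k Γ (.all2 n X A) → Prf2 k Γ (substS n X ps G A)
  | ex2I {k Γ n X A} (ps : List ℕ) (G : Fm2 F) : ps.length = n → ps.Nodup →
      Prf2 k Γ (substS n X ps G A) → Prf2 k Γ (.ex2 n X A)
  | ex2E {k Γ n X A C} : Prf2 k Γ (.ex2 n X A) → Prf2 k (A :: Γ) C →
      (n, X) ∉ fvs C → (∀ B ∈ Γ, (n, X) ∉ fvs B) → Prf2 k Γ C

/-- Provability from a (possibly infinite) set of hypotheses. -/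
def PrfTh1 {F R : Type} (k : Bool) (T : Set (Fm1 F R)) (A : Fm1 F R) : Prop :=
  ∃ Γ : List (Fm1 F R), (∀ B ∈ Γ, B ∈ T) ∧ Prf1 k Γ A

def PrfTh2 {F : Type} (k : Bool) (T : Set (Fm2 F)) (A : Fm2 F) : Prop :=
  ∃ Γ : List (Fm2 F), (∀ B ∈ Γ, B ∈ T) ∧ Prf2 k Γ A

/-! ### The coding `*` and the reverse coding `ᵒ` -/

/-- A measure of second-order formulas invariant under renaming substitutions. -/
def sz {F : Type} : Fm2 F → ℕ
  | .bot => 1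
  | .rel _ _ _ => 1
  | .imp A B => sz A + sz B + 1
  | .conj A B => sz A + sz B + 1
  | .disj A B => sz A + sz B + 1
  | .all1 _ A => sz A + 1
  | .ex1 _ A => sz A + 1
  | .all2 _ _ A => sz A + 1
  | .ex2 _ _ A => sz A + 1

theorem sz_rnSub {F : Type} (σ : ℕ → Tm F) (ρ : ℕ → ℕ → ℕ) (A : Fm2 F) :
    sz (rnSub σ ρ A) = sz A := by
  induction A generalizing σ ρ <;> simp [rnSub, sz, *]

/-- All first-order variables relevant to the encoding of `A`: the free
first-order variables together with the `φ`-images of the free second-order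
variables. -/
def starFv {F : Type} (φ : ℕ → ℕ → ℕ) (A : Fm2 F) : Finset ℕ :=
  fvo A ∪ (fvs A).image fun p => φ p.1 p.2

/-- The encoding `A ↦ A*` of second-order formulas into the first-order
language with the application predicates `Apₙ` (here: the relation symbol `n`
applied to `n+1` terms).  `φ n` is a bijection from second-order variables
of arity `n` to first-order variables, with inverse `ψ n`. -/
def star {F : Type} (φ ψ : ℕ → ℕ → ℕ) : Fm2 F → Fm1 F ℕ
  | .bot => .bot
  | .rel n X ts => .rel n (.var (φ n X) :: ts)
  | .imp A B => .imp (star φ ψ A) (star φ ψ B)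
  | .conj A B => .conj (star φ ψ A) (star φ ψ B)
  | .disj A B => .disj (star φ ψ A) (star φ ψ B)
  | .all1 x A =>
      let y := fresh (starFv φ A)
      .all y (star φ ψ (rename1 (Function.update id x y) A))
  | .ex1 x A =>
      let y := fresh (starFv φ A)
      .ex y (star φ ψ (rename1 (Function.update id x y) A))
  | .all2 n X A =>
      let y := fresh (starFv φ A)
      .all y (star φ ψ (rename2 n X (ψ n y) A))
  | .ex2 n X A =>
      let y := fresh (starFv φ A)
      .ex y (star φ ψ (rename2 n X (ψ n y) A))
termination_by A => sz A
decreasing_by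
  all_goals simp only [rename1, rename2, sz_rnSub, sz] <;> omega

/-- The (sorted) list of arities `n` such that the second-order variable
`ψ n x` (i.e. the one mapped to `x` by `φ`) occurs free in `B`. -/
def arities {F : Type} (φ : ℕ → ℕ → ℕ) (x : ℕ) (B : Fm2 F) : List ℕ :=
  (((fvs B).filter fun p => φ p.1 p.2 = x).image Prod.fst).sort (· ≤ ·)

/-- The reverse coding `F ↦ Fᵒ` from the first-order language with the
application predicates back to second-order logic. -/
def rev {F : Type} (φ ψ : ℕ → ℕ → ℕ) : Fm1 F ℕ → Fm2 F
  | .bot => .bot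
  | .rel n ts =>
      match ts with
      | .var x :: ts' => .rel n (ψ n x) ts'
      | _ => .bot
  | .imp A B => .imp (rev φ ψ A) (rev φ ψ B)
  | .conj A B => .conj (rev φ ψ A) (rev φ ψ B)
  | .disj A B => .disj (rev φ ψ A) (rev φ ψ B)
  | .all x A =>
      let B := rev φ ψ A
      .all1 x ((arities φ x B).foldr (fun n C => .all2 n (ψ n x) C) B)
  | .ex x A =>
      let B := rev φ ψ A
      .ex1 x ((arities φ x B).foldr (fun n C => .ex2 n (ψ n x) C) B)

/-- `φ` and `ψ` are inverse families of bijections between second-order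
variables of each arity and first-order variables. -/
def InvPair (φ ψ : ℕ → ℕ → ℕ) : Prop :=
  ∀ n, Function.LeftInverse (ψ n) (φ n) ∧ Function.RightInverse (ψ n) (φ n)

/-! ### Comprehension schemas -/

/-- An instance of the second-order comprehension schema:
`∀χ₁…∀χₘ ∃Xⁿ ∀x₁…∀xₙ (G ↔ Xⁿ(x₁,…,xₙ))`, where the `χᵢ` may be first- or
second-order variables. -/
def scInstance {F : Type} (n X : ℕ) (xs : List ℕ) (chis : List (ℕ ⊕ (ℕ × ℕ)))
    (G : Fm2 F) : Fm2 F :=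
  chis.foldr
    (fun c B => match c with
      | .inl x => .all1 x B
      | .inr (m, Y) => .all2 m Y B)
    (.ex2 n X (xs.foldr (fun x B => .all1 x B)
      (iff2 G (.rel n X (xs.map Tm.var)))))

/-- The second-order comprehension schema `SC₂` (a set of closed formulas). -/
def SC2 {F : Type} : Set (Fm2 F) :=
  { A | ∃ (n X : ℕ) (xs : List ℕ) (chis : List (ℕ ⊕ (ℕ × ℕ))) (G : Fm2 F),
      xs.length = n ∧ xs.Nodup ∧
      (n, X) ∉ fvs G ∧
      fvo G ⊆ xs.toFinset ∪ (chis.filterMap Sum.getLeft?).toFinset ∧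
      fvs G ⊆ (chis.filterMap Sum.getRight?).toFinset ∧
      A = scInstance n X xs chis G }

/-- The first-order comprehension schema `SC₁ = (SC₂)*`. -/
def SC1 {F : Type} (φ ψ : ℕ → ℕ → ℕ) : Set (Fm1 F ℕ) :=
  star φ ψ '' SC2

end SOL
namespace SOL

/-! ### Terms -/
mutual
theorem substT_congr {F : Type} {σ τ : ℕ → Tm F} : ∀ (t : Tm F), (∀ x ∈ fvT t, σ x = τ x) →
    substT σ t = substT τ t
  | .var x, h => by simpa [substT] using h x (by simp [fvT])
  | .func f ts, h => by
      simp only [substT]; rw [substTs_congr ts (by simpa [fvT] using h)]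
theorem substTs_congr {F : Type} {σ τ : ℕ → Tm F} : ∀ (ts : List (Tm F)),
    (∀ x ∈ fvTs ts, σ x = τ x) → substTs σ ts = substTs τ ts
  | [], _ => rfl
  | t :: ts, h => by
      simp only [substTs]
      rw [substT_congr t (fun x hx => h x (by simp [fvTs, hx])),
        substTs_congr ts (fun x hx => h x (by simp [fvTs, hx]))]
end

mutual
theorem substT_comp {F : Type} (σ τ : ℕ → Tm F) : ∀ (t : Tm F),
    substT σ (substT τ t) = substT (fun x => substT σ (τ x)) t
  | .var x => rfl
  | .func f ts => by simp only [substT]; rw [substTs_comp σ τ ts]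
theorem substTs_comp {F : Type} (σ τ : ℕ → Tm F) : ∀ (ts : List (Tm F)),
    substTs σ (substTs τ ts) = substTs (fun x => substT σ (τ x)) ts
  | [] => rfl
  | t :: ts => by simp only [substTs]; rw [substT_comp σ τ t, substTs_comp σ τ ts]
end

mutual
theorem substT_var {F : Type} : ∀ (t : Tm F), substT Tm.var t = t
  | .var x => rfl
  | .func f ts => by simp only [substT]; rw [substTs_var ts]
theorem substTs_var {F : Type} : ∀ (ts : List (Tm F)), substTs Tm.var ts = ts
  | [] => rfl
  | t :: ts => by simp only [substTs]; rw [substT_var t, substTs_var ts]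
end

mutual
theorem fvT_substT {F : Type} (σ : ℕ → ℕ) : ∀ (t : Tm F),
    fvT (substT (fun x => Tm.var (σ x)) t) = (fvT t).image σ
  | .var x => by simp [substT, fvT]
  | .func f ts => by simp only [substT, fvT]; rw [fvTs_substTs σ ts]
theorem fvTs_substTs {F : Type} (σ : ℕ → ℕ) : ∀ (ts : List (Tm F)),
    fvTs (substTs (fun x => Tm.var (σ x)) ts) = (fvTs ts).image σ
  | [] => by simp [substTs, fvTs]
  | t :: ts => by
      simp only [substTs, fvTs]; rw [fvT_substT σ t, fvTs_substTs σ ts, Finset.image_union]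
end

theorem substTs_eq_map {F : Type} (σ : ℕ → Tm F) (ts : List (Tm F)) :
    substTs σ ts = ts.map (substT σ) := by
  induction ts with
  | nil => rfl
  | cons t ts ih => simp [substTs, ih]

theorem fvTs_map_var {F : Type} (xs : List ℕ) :
    fvTs (xs.map (Tm.var : ℕ → Tm F)) = xs.toFinset := by
  induction xs with
  | nil => rfl
  | cons t ts ih => simp [fvTs, fvT, ih]

theorem substTs_map_var {F : Type} (σ : ℕ → Tm F) (xs : List ℕ) :
    substTs σ (xs.map (Tm.var : ℕ → Tm F)) = xs.map σ := by
  simp [substTs_eq_map, substT, Function.comp_def]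

theorem mkσ_map {F : Type} : ∀ (ps : List ℕ) (ts : List (Tm F)), ps.Nodup →
    ts.length = ps.length → ps.map (mkσ ps ts) = ts
  | [], [], _, _ => rfl
  | [], _ :: _, _, h => by simp at h
  | _ :: _, [], _, h => by simp at h
  | p :: ps, t :: ts, hn, hl => by
      have ih := mkσ_map ps ts (List.nodup_cons.1 hn).2 (by simpa using hl)
      simp only [List.map_cons]
      congr 1
      · simp [mkσ]
      · conv_rhs => rw [← ih]
        apply List.map_congr_left
        intro a ha
        have : a ≠ p := by rintro rfl; exact (List.nodup_cons.1 hn).1 ha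
        have hb : (a == p) = false := by simp [this]
        simp [mkσ, List.lookup_cons, hb]

theorem mkσ_not_mem {F : Type} : ∀ (ps : List ℕ) (ts : List (Tm F)) (x : ℕ), x ∉ ps →
    mkσ ps ts x = .var x
  | [], _, _, _ => rfl
  | _ :: _, [], _, _ => rfl
  | p :: ps, t :: ts, x, h => by
      have ih := mkσ_not_mem ps ts x (by simp_all)
      have hx : x ≠ p := by simp_all
      have hb : (x == p) = false := by simp [hx]
      simpa [mkσ, List.lookup_cons, hb] using ih

theorem lt_fresh {s : Finset ℕ} {x : ℕ} (h : x ∈ s) : x < fresh s :=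
  Nat.lt_succ_of_le (Finset.le_sup (f := id) h)

theorem fresh_not_mem (s : Finset ℕ) : fresh s ∉ s := fun h => lt_irrefl _ (lt_fresh h)

theorem sImg_var {F : Type} (σ : ℕ → ℕ) (s : Finset ℕ) :
    sImg (fun x => (Tm.var (σ x) : Tm F)) s = s.image σ := by
  ext y; simp [sImg, fvT, eq_comm]

theorem update_var {F : Type} (σ : ℕ → ℕ) (x y : ℕ) :
    Function.update (fun x => (Tm.var (σ x) : Tm F)) x (.var y) =
      fun z => Tm.var (Function.update σ x y z) := by
  ext z; simp only [Function.update_apply]; split_ifs <;> rfl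

/-! ### Uniform view of formulas -/
inductive Cn | imp | conj | disj

def op {F : Type} : Cn → Fm2 F → Fm2 F → Fm2 F
  | .imp, A, B => .imp A B
  | .conj, A, B => .conj A B
  | .disj, A, B => .disj A B

def Q {F : Type} : Bool → Option ℕ → ℕ → Fm2 F → Fm2 F
  | true, none, x, A => .all1 x A
  | false, none, x, A => .ex1 x A
  | true, some n, x, A => .all2 n x A
  | false, some n, x, A => .ex2 n x A

theorem ind {F : Type} {P : Fm2 F → Prop} (hb : P .bot) (hr : ∀ n X ts, P (.rel n X ts))
    (ho : ∀ o A B, P A → P B → P (op o A B))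
    (hq : ∀ b k x A, P A → P (Q b k x A)) (A : Fm2 F) : P A := by
  induction A with
  | bot => exact hb
  | rel n X ts => exact hr n X ts
  | imp A B h1 h2 => exact ho .imp A B h1 h2
  | conj A B h1 h2 => exact ho .conj A B h1 h2
  | disj A B h1 h2 => exact ho .disj A B h1 h2
  | all1 x A h => exact hq true none x A h
  | ex1 x A h => exact hq false none x A h
  | all2 n x A h => exact hq true (some n) x A h
  | ex2 n x A h => exact hq false (some n) x A h

abbrev Env := Option ℕ → ℕ → ℕ

def upd (σ : Env) (k : Option ℕ) (x y : ℕ) : Env :=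
  fun k' x' => if k' = k ∧ x' = x then y else σ k' x'

def fv {F : Type} : Fm2 F → Finset (Option ℕ × ℕ)
  | .bot => ∅
  | .rel n X ts => insert (some n, X) ((fvTs ts).image fun x => (none, x))
  | .imp A B => fv A ∪ fv B
  | .conj A B => fv A ∪ fv B
  | .disj A B => fv A ∪ fv B
  | .all1 x A => (fv A).erase (none, x)
  | .ex1 x A => (fv A).erase (none, x)
  | .all2 n X A => (fv A).erase (some n, X)
  | .ex2 n X A => (fv A).erase (some n, X)

theorem fv_op {F : Type} (o : Cn) (A B : Fm2 F) : fv (op o A B) = fv A ∪ fv B := by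
  cases o <;> rfl
theorem fv_Q {F : Type} (b k x) (A : Fm2 F) : fv (Q b k x A) = (fv A).erase (k, x) := by
  cases b <;> cases k <;> rfl

theorem mem_fv_none {F : Type} (A : Fm2 F) (x : ℕ) : (none, x) ∈ fv A ↔ x ∈ fvo A := by
  induction A <;> simp_all [fv, fvo]
theorem mem_fv_some {F : Type} (A : Fm2 F) (n x : ℕ) : (some n, x) ∈ fv A ↔ (n, x) ∈ fvs A := by
  induction A <;> simp_all [fv, fvs]

/-- all names, free or bound -/
def occ {F : Type} : Fm2 F → Finset (Option ℕ × ℕ)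
  | .bot => ∅
  | .rel n X ts => insert (some n, X) ((fvTs ts).image fun x => (none, x))
  | .imp A B => occ A ∪ occ B
  | .conj A B => occ A ∪ occ B
  | .disj A B => occ A ∪ occ B
  | .all1 x A => insert (none, x) (occ A)
  | .ex1 x A => insert (none, x) (occ A)
  | .all2 n X A => insert (some n, X) (occ A)
  | .ex2 n X A => insert (some n, X) (occ A)

theorem occ_op {F : Type} (o : Cn) (A B : Fm2 F) : occ (op o A B) = occ A ∪ occ B := by
  cases o <;> rfl
theorem occ_Q {F : Type} (b k x) (A : Fm2 F) : occ (Q b k x A) = insert (k, x) (occ A) := by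
  cases b <;> cases k <;> rfl

theorem fv_sub_occ {F : Type} (A : Fm2 F) : fv A ⊆ occ A := by
  induction A using ind with
  | hb => simp [fv]
  | hr => simp [fv, occ]
  | ho o A B h1 h2 => rw [fv_op, occ_op]; exact Finset.union_subset_union h1 h2
  | hq b k x A h =>
    rw [fv_Q, occ_Q]; intro p hp; exact Finset.mem_insert_of_mem (h (Finset.mem_of_mem_erase hp))

/-- uniform renaming of all names -/
def ren {F : Type} (π : Env) : Fm2 F → Fm2 F
  | .bot => .bot
  | .rel n X ts => .rel n (π (some n) X) (substTs (fun x => .var (π none x)) ts)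
  | .imp A B => .imp (ren π A) (ren π B)
  | .conj A B => .conj (ren π A) (ren π B)
  | .disj A B => .disj (ren π A) (ren π B)
  | .all1 x A => .all1 (π none x) (ren π A)
  | .ex1 x A => .ex1 (π none x) (ren π A)
  | .all2 n X A => .all2 n (π (some n) X) (ren π A)
  | .ex2 n X A => .ex2 n (π (some n) X) (ren π A)

theorem ren_op {F : Type} (π : Env) (o : Cn) (A B : Fm2 F) :
    ren π (op o A B) = op o (ren π A) (ren π B) := by
  cases o <;> rfl
theorem ren_Q {F : Type} (π : Env) (b k x) (A : Fm2 F) :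
    ren π (Q b k x A) = Q b k (π k x) (ren π A) := by
  cases b <;> cases k <;> rfl

/-- the fresh bound name -/
def fr (N : ℕ) (σ : Env) (k : Option ℕ) (S : Finset (Option ℕ × ℕ)) : ℕ :=
  fresh (insert N ((S.filter fun p => p.1.isSome = k.isSome).image fun p => σ p.1 p.2))

def bS {F : Type} (N : ℕ) : Env → Fm2 F → Fm2 F
  | _, .bot => .bot
  | σ, .rel n X ts => .rel n (σ (some n) X) (substTs (fun x => .var (σ none x)) ts)
  | σ, .imp A B => .imp (bS N σ A) (bS N σ B)
  | σ, .conj A B => .conj (bS N σ A) (bS N σ B)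
  | σ, .disj A B => .disj (bS N σ A) (bS N σ B)
  | σ, .all1 x A => .all1 (fr N σ none (fv A)) (bS N (upd σ none x (fr N σ none (fv A))) A)
  | σ, .ex1 x A => .ex1 (fr N σ none (fv A)) (bS N (upd σ none x (fr N σ none (fv A))) A)
  | σ, .all2 n x A =>
    .all2 n (fr N σ (some n) (fv A)) (bS N (upd σ (some n) x (fr N σ (some n) (fv A))) A)
  | σ, .ex2 n x A =>
    .ex2 n (fr N σ (some n) (fv A)) (bS N (upd σ (some n) x (fr N σ (some n) (fv A))) A)

theorem bS_op {F : Type} (N : ℕ) (σ : Env) (o : Cn) (A B : Fm2 F) :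
    bS N σ (op o A B) = op o (bS N σ A) (bS N σ B) := by
  cases o <;> rfl
theorem bS_Q {F : Type} (N : ℕ) (σ : Env) (b k x) (A : Fm2 F) :
    bS N σ (Q b k x A) = Q b k (fr N σ k (fv A)) (bS N (upd σ k x (fr N σ k (fv A))) A) := by
  cases b <;> cases k <;> rfl

theorem bS_congr {F : Type} (N : ℕ) (A : Fm2 F) : ∀ (σ τ : Env),
    (∀ p ∈ occ A, σ p.1 p.2 = τ p.1 p.2) → bS N σ A = bS N τ A := by
  induction A using ind with
  | hb => intros; rfl
  | hr n X ts =>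
    intro σ τ h
    simp only [bS]
    rw [h (some n, X) (by simp [occ])]
    rw [substTs_congr (τ := fun x => .var (τ none x))]
    intro x hx
    rw [h (none, x) (by simp [occ, hx])]
  | ho o A B h1 h2 =>
    intro σ τ h
    rw [bS_op, bS_op, h1 σ τ, h2 σ τ] <;> intro p hp <;> apply h <;> rw [occ_op] <;> simp [hp]
  | hq b k x A ih =>
    intro σ τ h
    rw [occ_Q] at h
    have e : fr N σ k (fv A) = fr N τ k (fv A) := by
      unfold fr
      congr 2
      apply Finset.image_congr
      intro p hp
      exact h p (Finset.mem_insert_of_mem (fv_sub_occ A (Finset.mem_filter.1 hp).1))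
    rw [bS_Q, bS_Q, e]
    congr 1
    apply ih
    intro p hp
    unfold upd
    split_ifs
    · rfl
    · exact h p (Finset.mem_insert_of_mem hp)

/-- The freshness property of `fr`. -/
theorem fr_ne {N : ℕ} {σ : Env} {k : Option ℕ} {S : Finset (Option ℕ × ℕ)} {p : Option ℕ × ℕ}
    (hp : p ∈ S) (hk : p.1.isSome = k.isSome) : σ p.1 p.2 ≠ fr N σ k S := by
  intro h
  apply fresh_not_mem (insert N ((S.filter fun p => p.1.isSome = k.isSome).image
    fun p => σ p.1 p.2))
  apply Finset.mem_insert_of_mem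
  apply Finset.mem_image.2
  exact ⟨p, by simp [hp, hk], h⟩

def actE (σ : Env) : Option ℕ × ℕ → Option ℕ × ℕ := fun p => (p.1, σ p.1 p.2)

theorem fv_bS {F : Type} (N : ℕ) (A : Fm2 F) : ∀ (σ : Env),
    fv (bS N σ A) = (fv A).image (actE σ) := by
  induction A using ind with
  | hb => intros; rfl
  | hr n X ts =>
    intro σ
    simp only [bS, fv]
    rw [fvTs_substTs (σ none), Finset.image_insert, Finset.image_image, Finset.image_image]
    rfl
  | ho o A B h1 h2 =>
    intro σ
    rw [bS_op, fv_op, fv_op, h1, h2, Finset.image_union]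
  | hq b k x A ih =>
    intro σ
    rw [bS_Q, fv_Q, fv_Q, ih]
    ext ⟨k', z⟩
    simp only [Finset.mem_erase, Finset.mem_image, actE, Prod.exists, Prod.mk.injEq, ne_eq]
    constructor
    · rintro ⟨h1, k1, w, hw, rfl, h3⟩
      refine ⟨k1, w, ⟨?_, hw⟩, rfl, ?_⟩
      · rintro ⟨rfl, rfl⟩
        simp [upd] at h3
        exact h1 ⟨rfl, h3.symm⟩
      · by_cases h : k1 = k ∧ w = x
        · obtain ⟨rfl, rfl⟩ := h
          simp [upd] at h3
          exact absurd ⟨rfl, h3.symm⟩ h1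
        · simpa [upd, h] using h3
    · rintro ⟨k1, w, ⟨h1, hw⟩, rfl, h3⟩
      refine ⟨?_, k1, w, hw, rfl, ?_⟩
      · rintro ⟨rfl, rfl⟩
        exact fr_ne hw rfl h3
      · simpa [upd, h1] using h3

theorem fv_ren {F : Type} (A : Fm2 F) (σ : Env) (hσ : ∀ k, Function.Injective (σ k)) :
    fv (ren σ A) = (fv A).image (actE σ) := by
  have hinj : Function.Injective (actE σ) := by
    rintro ⟨k, x⟩ ⟨k', x'⟩ h
    simp only [actE, Prod.mk.injEq] at h
    obtain ⟨rfl, h⟩ := h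
    rw [hσ k h]
  induction A using ind with
  | hb => rfl
  | hr n X ts =>
    simp only [ren, fv]
    rw [fvTs_substTs (σ none), Finset.image_insert, Finset.image_image, Finset.image_image]
    rfl
  | ho o A B h1 h2 => rw [ren_op, fv_op, fv_op, h1, h2, Finset.image_union]
  | hq b k x A ih => rw [ren_Q, fv_Q, fv_Q, ih, Finset.image_erase hinj]; rfl

theorem fr_image (N : ℕ) (σ π : Env) (k : Option ℕ) (S : Finset (Option ℕ × ℕ)) :
    fr N σ k (S.image (actE π)) = fr N (fun k x => σ k (π k x)) k S := by
  unfold fr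
  congr 2
  ext y
  simp only [Finset.mem_image, Finset.mem_filter, actE]
  constructor
  · rintro ⟨p, ⟨⟨q, hq, rfl⟩, h2⟩, rfl⟩; exact ⟨q, ⟨hq, h2⟩, rfl⟩
  · rintro ⟨q, ⟨hq, h2⟩, rfl⟩; exact ⟨_, ⟨⟨q, hq, rfl⟩, h2⟩, rfl⟩

theorem bS_ren {F : Type} (N : ℕ) (π : Env) (hπ : ∀ k, Function.Injective (π k)) (A : Fm2 F) :
    ∀ (σ : Env), bS N σ (ren π A) = bS N (fun k x => σ k (π k x)) A := by
  induction A using ind with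
  | hb => intros; rfl
  | hr n X ts => intro σ; simp only [ren, bS]; rw [substTs_comp]; rfl
  | ho o A B h1 h2 => intro σ; rw [ren_op, bS_op, bS_op, h1, h2]
  | hq b k x A ih =>
    intro σ
    rw [ren_Q, bS_Q, bS_Q, ih, fv_ren A π hπ, fr_image]
    congr 2
    funext k' x'
    simp only [upd]
    by_cases h : k' = k
    · subst h; simp [(hπ k').eq_iff]
    · simp [h]

theorem ren_ren {F : Type} (π θ : Env) (A : Fm2 F) :
    ren π (ren θ A) = ren (fun k x => π k (θ k x)) A := by
  induction A using ind with
  | hb => rfl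
  | hr n X ts => simp only [ren]; rw [substTs_comp]; rfl
  | ho o A B h1 h2 => simp only [ren_op, h1, h2]
  | hq b k x A ih => simp only [ren_Q, ih]

theorem ren_id {F : Type} (A : Fm2 F) : ren (fun _ x => x) A = A := by
  induction A using ind with
  | hb => rfl
  | hr n X ts => simp only [ren]; rw [substTs_var]
  | ho o A B h1 h2 => simp only [ren_op, h1, h2]
  | hq b k x A ih => simp only [ren_Q, ih]
end SOL
namespace SOL

def sw (k : Option ℕ) (a b : ℕ) : Env := fun k' x => if k' = k then Equiv.swap a b x else x

theorem sw_inj (k : Option ℕ) (a b : ℕ) (k' : Option ℕ) : Function.Injective (sw k a b k') := by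
  intro x y h
  unfold sw at h
  split_ifs at h
  · exact (Equiv.swap a b).injective h
  · exact h

theorem sw_left (k : Option ℕ) (a b : ℕ) : sw k a b k a = b := by simp [sw]
theorem sw_of_ne {k : Option ℕ} {a b : ℕ} {k' : Option ℕ} {x : ℕ} (h : k' = k → x ≠ a ∧ x ≠ b) :
    sw k a b k' x = x := by
  unfold sw
  split_ifs with hk
  · exact Equiv.swap_apply_of_ne_of_ne (h hk).1 (h hk).2
  · rfl
theorem sw_self (k : Option ℕ) (a : ℕ) : sw k a a = fun _ x => x := by
  funext k' x; simp [sw]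

def Good (s : ℕ → Env) : Prop := ∃ K0, ∀ N k x, K0 ≤ x → s N k x = x

def Rel {F : Type} (K : ℕ) (s : ℕ → Env) (A B : Fm2 F) : Prop :=
  fv A = fv B ∧ ∃ N, K ≤ N ∧ bS N (s N) A = bS N (s N) B

def Eqv {F : Type} (A B : Fm2 F) : Prop := ∀ K s, Good s → Relation.EqvGen (Rel K s) A B

theorem Eqv.refl {F : Type} (A : Fm2 F) : Eqv A A := fun _ _ _ => .refl _
theorem Eqv.symm {F : Type} {A B : Fm2 F} (h : Eqv A B) : Eqv B A :=
  fun K s hs => .symm _ _ (h K s hs)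
theorem Eqv.trans {F : Type} {A B C : Fm2 F} (h : Eqv A B) (h' : Eqv B C) : Eqv A C :=
  fun K s hs => .trans _ _ _ (h K s hs) (h' K s hs)

theorem Eqv.op {F : Type} (o : Cn) {A A' B B' : Fm2 F} (h : Eqv A A') (h' : Eqv B B') :
    Eqv (op o A B) (op o A' B') := by
  intro K s hs
  have h1 := h K s hs
  have h2 := h' K s hs
  clear h h'
  refine .trans _ (SOL.op o A' B) _ ?_ ?_
  · clear h2
    induction h1 with
    | rel A A' r =>
      obtain ⟨e, N, hN, e2⟩ := r
      exact .rel _ _ ⟨by rw [fv_op, fv_op, e], N, hN, by rw [bS_op, bS_op, e2]⟩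
    | refl => exact .refl _
    | symm _ _ _ ih => exact .symm _ _ ih
    | trans _ _ _ _ _ ih1 ih2 => exact .trans _ _ _ ih1 ih2
  · clear h1
    induction h2 with
    | rel A A' r =>
      obtain ⟨e, N, hN, e2⟩ := r
      exact .rel _ _ ⟨by rw [fv_op, fv_op, e], N, hN, by rw [bS_op, bS_op, e2]⟩
    | refl => exact .refl _
    | symm _ _ _ ih => exact .symm _ _ ih
    | trans _ _ _ _ _ ih1 ih2 => exact .trans _ _ _ ih1 ih2

theorem Good.upd {s : ℕ → Env} (hs : Good s) (k : Option ℕ) (x : ℕ) (y : ℕ → ℕ) :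
    Good (fun N => upd (s N) k x (y N)) := by
  obtain ⟨K0, h⟩ := hs
  refine ⟨max K0 (x + 1), fun N k' x' hx => ?_⟩
  have : x' ≠ x := by omega
  simp only [SOL.upd, this, and_false, if_false]
  exact h _ _ _ (by omega)

theorem Eqv.Q {F : Type} (b : Bool) (k : Option ℕ) (x : ℕ) {A B : Fm2 F} (h : Eqv A B) :
    Eqv (Q b k x A) (Q b k x B) := by
  intro K s hs
  have h1 := h K _ (hs.upd k x fun N => fr N (s N) k (fv A))
  clear h
  generalize hS : fv A = S at h1
  suffices fv A = fv B ∧ (fv A = S → Relation.EqvGen (Rel K s) (SOL.Q b k x A) (SOL.Q b k x B)) from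
    this.2 hS
  clear hS
  induction h1 with
  | rel A A' r =>
    obtain ⟨e, N, hN, e2⟩ := r
    refine ⟨e, fun hS => .rel _ _ ⟨by rw [fv_Q, fv_Q, e], N, hN, ?_⟩⟩
    rw [bS_Q, bS_Q, ← e, hS, e2]
  | refl => exact ⟨rfl, fun _ => .refl _⟩
  | symm _ _ _ ih => exact ⟨ih.1.symm, fun h => .symm _ _ (ih.2 (ih.1.trans h))⟩
  | trans _ _ _ _ _ ih1 ih2 =>
    exact ⟨ih1.1.trans ih2.1, fun h => .trans _ _ _ (ih1.2 h) (ih2.2 (ih1.1.symm.trans h))⟩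

theorem fr_upd_congr {N : ℕ} {σ : Env} {k : Option ℕ} {x v v' : ℕ} {S : Finset (Option ℕ × ℕ)}
    (h : max v N = max v' N) : fr N (upd σ k x v) k S = fr N (upd σ k x v') k S := by
  have key : ∀ w w' : ℕ, max w N = max w' N →
      fr N (upd σ k x w) k S ≤ fr N (upd σ k x w') k S := by
    intro w w' hw
    unfold fr fresh
    apply Nat.succ_le_succ
    apply Finset.sup_le
    intro y hy
    set T := (insert N ((S.filter fun p => p.1.isSome = k.isSome).image
      fun p => upd σ k x w' p.1 p.2)) with hT
    have hNT : N ≤ T.sup id := Finset.le_sup (f := id) (Finset.mem_insert_self _ _)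
    rcases Finset.mem_insert.1 hy with rfl | hy
    · exact hNT
    · obtain ⟨p, hp, rfl⟩ := Finset.mem_image.1 hy
      have h2 : upd σ k x w' p.1 p.2 ≤ T.sup id :=
        Finset.le_sup (f := id) (Finset.mem_insert_of_mem (Finset.mem_image_of_mem _ hp))
      simp only [id]
      unfold upd at h2 ⊢
      split_ifs at h2 ⊢
      · omega
      · exact h2
  exact le_antisymm (key _ _ h) (key _ _ h.symm)

theorem fr_congr {N : ℕ} {σ τ : Env} {k : Option ℕ} {S : Finset (Option ℕ × ℕ)}
    (h : ∀ p ∈ S, p.1.isSome = k.isSome → σ p.1 p.2 = τ p.1 p.2) : fr N σ k S = fr N τ k S := by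
  unfold fr
  congr 2
  apply Finset.image_congr
  intro p hp
  have := Finset.mem_filter.1 hp
  exact h p this.1 this.2

def VV {F : Type} (b : Bool) (k : Option ℕ) (x w : ℕ) (A : Fm2 F) : Fm2 F :=
  Q b k w (ren (sw k x w) A)

theorem bS_VV {F : Type} (N : ℕ) (σ : Env) (b : Bool) (k : Option ℕ) (x w : ℕ) (A : Fm2 F)
    (hw : (k, w) ∉ occ A ∨ w = x) : bS N σ (VV b k x w A) =
      Q b k (fr N (upd σ k x (σ k w)) k (fv A))
        (bS N (upd σ k x (fr N (upd σ k x (σ k w)) k (fv A))) A) := by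
  have hne : ∀ p ∈ occ A, p ≠ (k, x) → p.1 = k → p.2 ≠ x ∧ p.2 ≠ w := by
    rintro ⟨k', z⟩ hp h1 rfl
    have h3 : z ≠ x := by rintro rfl; exact h1 rfl
    refine ⟨h3, ?_⟩
    rintro rfl
    rcases hw with hw | hw
    · exact hw hp
    · exact h3 hw
  unfold VV
  rw [bS_Q, bS_ren _ _ (sw_inj k x w), fv_ren _ _ (sw_inj k x w), fr_image]
  have e : fr N (fun k_1 z => σ k_1 (sw k x w k_1 z)) k (fv A) =
      fr N (upd σ k x (σ k w)) k (fv A) := by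
    apply fr_congr
    intro p hp _
    by_cases h : p = (k, x)
    · subst h; simp [sw_left, upd]
    · have h' : ¬ (p.1 = k ∧ p.2 = x) := fun h2 => h (Prod.ext h2.1 h2.2)
      rw [sw_of_ne (hne p (fv_sub_occ A hp) h)]
      simp [upd, h']
  rw [e]
  congr 1
  apply bS_congr
  intro p hp
  by_cases h : p = (k, x)
  · subst h; simp [sw_left, upd]
  · have h' : ¬ (p.1 = k ∧ p.2 = x) := fun h2 => h (Prod.ext h2.1 h2.2)
    have h3 := hne p hp h
    rw [sw_of_ne h3]
    have h4 : ¬ (p.1 = k ∧ p.2 = w) := fun h2 => (h3 h2.1).2 h2.2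
    simp [upd, h', h4]

theorem fv_VV {F : Type} (b : Bool) (k : Option ℕ) (x w : ℕ) (A : Fm2 F)
    (hw : (k, w) ∉ occ A ∨ w = x) : fv (VV b k x w A) = (fv A).erase (k, x) := by
  unfold VV
  rw [fv_Q, fv_ren _ _ (sw_inj k x w)]
  ext ⟨k', z⟩
  have hww : (k, w) ∈ fv A → w = x := by
    intro h; rcases hw with hw | hw
    · exact absurd (fv_sub_occ A h) hw
    · exact hw
  simp only [Finset.mem_erase, Finset.mem_image, actE, Prod.exists, Prod.mk.injEq, ne_eq]
  constructor
  · rintro ⟨h1, k', z', h2, rfl, rfl⟩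
    by_cases hk : k' = k
    · subst hk
      by_cases hz : z' = x
      · subst hz; simp [sw_left] at h1
      · have hzw : z' ≠ w := by rintro rfl; exact hz (hww h2)
        rw [sw_of_ne (fun _ => ⟨hz, hzw⟩)]
        exact ⟨fun h => hz h.2, h2⟩
    · rw [sw_of_ne (fun h => absurd h hk)]
      exact ⟨fun h => hk h.1, h2⟩
  · rintro ⟨h1, h2⟩
    have hz : k' = k → z ≠ x ∧ z ≠ w := by
      rintro rfl
      refine ⟨fun h => h1 ⟨rfl, h⟩, ?_⟩
      rintro rfl
      exact h1 ⟨rfl, hww h2⟩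
    exact ⟨fun h => (hz h.1).2 h.2, k', z, h2, rfl, sw_of_ne hz⟩

theorem root {F : Type} (b : Bool) (k : Option ℕ) (x u : ℕ) (A : Fm2 F) (hu : (k, u) ∉ occ A) :
    Eqv (Q b k x A) (Q b k u (ren (sw k x u) A)) := by
  have hx : Q b k x A = VV b k x x A := by unfold VV; rw [sw_self, ren_id]
  rw [hx]
  change Eqv _ (VV b k x u A)
  intro K s hs
  obtain ⟨K0, hK0⟩ := hs
  set N := max K K0 + ((occ A).sup Prod.snd) + 1 with hN
  have hocc : ∀ w, N ≤ w → (k, w) ∉ occ A := by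
    intro w hw h
    have : w ≤ (occ A).sup Prod.snd := Finset.le_sup (f := Prod.snd) h
    omega
  have step : ∀ N' w w', K ≤ N' → ((k, w) ∉ occ A ∨ w = x) → ((k, w') ∉ occ A ∨ w' = x) →
      max (s N' k w) N' = max (s N' k w') N' →
      Relation.EqvGen (Rel K s) (VV b k x w A) (VV b k x w' A) := by
    intro N' w w' h1 h2 h3 h4
    refine .rel _ _ ⟨by rw [fv_VV _ _ _ _ _ h2, fv_VV _ _ _ _ _ h3], N', h1, ?_⟩
    rw [bS_VV _ _ _ _ _ _ _ h2, bS_VV _ _ _ _ _ _ _ h3, fr_upd_congr h4]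
  set u1 := max (s N k x) N with hu1
  set u2 := max (s N k u) N with hu2
  have e1 : ∀ N', s N' k u1 = u1 := fun N' => hK0 _ _ _ (by omega)
  have e2 : ∀ N', s N' k u2 = u2 := fun N' => hK0 _ _ _ (by omega)
  refine .trans _ _ _ (step N x u1 (by omega) (.inr rfl) (.inl (hocc _ (by omega))) ?_)
    (.trans _ _ _ (step (max u1 u2) u1 u2 (by omega) (.inl (hocc _ (by omega)))
      (.inl (hocc _ (by omega))) ?_)
      (step N u2 u (by omega) (.inl (hocc _ (by omega))) (.inl hu) ?_))
  · rw [e1]; omega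
  · rw [e1, e2]; omega
  · rw [e2]; omega

theorem mainEqv {F : Type} (A : Fm2 F) : ∀ (π σ : Env), (∀ k, Function.Injective (π k)) →
    (∀ p ∈ fv A, σ p.1 p.2 = π p.1 p.2) → Eqv (ren π A) (bS 0 σ A) := by
  induction A using ind with
  | hb => intros; exact .refl _
  | hr n X ts =>
    intro π σ hπ h
    simp only [ren, bS]
    rw [h (some n, X) (by simp [fv]), substTs_congr (τ := fun x => .var (σ none x))]
    · exact .refl _
    · intro x hx; rw [h (none, x) (by simp [fv, hx])]
  | ho o A B h1 h2 =>
    intro π σ hπ h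
    rw [ren_op, bS_op]
    rw [fv_op] at h
    exact .op o (h1 π σ hπ fun p hp => h p (by simp [hp])) (h2 π σ hπ fun p hp => h p (by simp [hp]))
  | hq b k x A ih =>
    intro π σ hπ h
    rw [ren_Q, bS_Q]
    rw [fv_Q] at h
    set a := π k x with ha
    set y := fr 0 σ k (fv A) with hy
    have hcomp : ∀ c d, ∀ θ : Env, (∀ k, Function.Injective (θ k)) →
        ∀ k', Function.Injective ((fun k'' z => sw k c d k'' (θ k'' z)) k') := by
      intro c d θ hθ k'
      exact (sw_inj k c d k').comp (hθ k')
    set πy : Env := fun k'' z => sw k a y k'' (π k'' z) with hπy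
    obtain ⟨u, hu⟩ := Infinite.exists_notMem_finset
      ((occ (ren π A) ∪ occ (ren πy A)).image Prod.snd ∪ (fv A).image (fun p => π p.1 p.2) ∪ {a, y})
    simp only [Finset.mem_union, Finset.mem_image, not_or, Finset.mem_insert,
      Finset.mem_singleton] at hu
    obtain ⟨⟨hu1, hu2⟩, hu3, hu4⟩ := hu
    have hne : ∀ p ∈ fv A, ¬ (p.1 = k ∧ p.2 = x) → p.1 = k → π p.1 p.2 ≠ a ∧ π p.1 p.2 ≠ u ∧
        π p.1 p.2 ≠ y := by
      rintro ⟨k', z⟩ hp h1 rfl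
      simp only [true_and] at h1
      refine ⟨fun h => h1 (hπ _ h), fun h => hu2 ⟨_, hp, h⟩, ?_⟩
      rw [← h _ (Finset.mem_erase.2 ⟨by simpa using h1, hp⟩)]
      exact fr_ne hp rfl
    have hσ : ∀ p ∈ fv A, ¬ (p.1 = k ∧ p.2 = x) → σ p.1 p.2 = π p.1 p.2 := fun p hp h1 =>
      h p (Finset.mem_erase.2 ⟨fun e => h1 (by rw [e]; simp), hp⟩)
    have s1 : Eqv (Q b k a (ren π A)) (Q b k u (ren (sw k a u) (ren π A))) :=
      root b k a u _ (fun h => hu1 ⟨_, Or.inl h, rfl⟩)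
    have s2 : Eqv (ren (sw k a u) (ren π A)) (bS 0 (upd σ k x u) A) := by
      rw [ren_ren]
      apply ih _ _ (hcomp _ _ _ hπ)
      intro p hp
      by_cases h1 : p.1 = k ∧ p.2 = x
      · simp only [upd, h1, and_self, if_true]
        rw [← ha, sw_left]
      · simp only [upd, h1, if_false]
        rw [sw_of_ne, hσ p hp h1]
        intro hk
        exact ⟨(hne p hp h1 hk).1, (hne p hp h1 hk).2.1⟩
    have s3 : Eqv (ren (sw k y u) (ren πy A)) (bS 0 (upd σ k x u) A) := by
      rw [ren_ren]
      apply ih _ _ (hcomp _ _ _ (hcomp _ _ _ hπ))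
      intro p hp
      by_cases h1 : p.1 = k ∧ p.2 = x
      · simp only [upd, h1, and_self, if_true, hπy]
        rw [← ha, sw_left, sw_left]
      · simp only [upd, h1, if_false, hπy]
        have h5 : sw k a y p.1 (π p.1 p.2) = π p.1 p.2 := sw_of_ne fun hk =>
          ⟨(hne p hp h1 hk).1, (hne p hp h1 hk).2.2⟩
        rw [h5, sw_of_ne, hσ p hp h1]
        intro hk
        exact ⟨(hne p hp h1 hk).2.2, (hne p hp h1 hk).2.1⟩
    have s4 : Eqv (Q b k y (ren πy A)) (Q b k u (ren (sw k y u) (ren πy A))) :=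
      root b k y u _ (fun h => hu1 ⟨_, Or.inr h, rfl⟩)
    have s5 : Eqv (ren πy A) (bS 0 (upd σ k x y) A) := by
      apply ih _ _ (hcomp _ _ _ hπ)
      intro p hp
      by_cases h1 : p.1 = k ∧ p.2 = x
      · simp only [upd, h1, and_self, if_true, hπy]
        rw [← ha, sw_left]
      · simp only [upd, h1, if_false, hπy]
        rw [sw_of_ne, hσ p hp h1]
        intro hk
        exact ⟨(hne p hp h1 hk).1, (hne p hp h1 hk).2.2⟩
    exact s1.trans ((s2.Q b k u).trans ((s3.symm.Q b k u).trans (s4.symm.trans (s5.Q b k y))))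

end SOL
namespace SOL

theorem image_none {F : Type} (A : Fm2 F) (σ : Env) :
    ((fv A).filter fun p => p.1.isSome = (none : Option ℕ).isSome).image (fun p => σ p.1 p.2) =
      (fvo A).image (σ none) := by
  ext y
  simp only [Finset.mem_image, Finset.mem_filter, Prod.exists]
  constructor
  · rintro ⟨k, x, ⟨h1, h2⟩, rfl⟩
    cases k with
    | none => exact ⟨x, (mem_fv_none A x).1 h1, rfl⟩
    | some => simp at h2
  · rintro ⟨x, h, rfl⟩
    exact ⟨none, x, ⟨(mem_fv_none A x).2 h, rfl⟩, rfl⟩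

theorem image_some {F : Type} (A : Fm2 F) (σ : Env) (n : ℕ) :
    ((fv A).filter fun p => p.1.isSome = (some n : Option ℕ).isSome).image (fun p => σ p.1 p.2) =
      (fvs A).image (fun p => σ (some p.1) p.2) := by
  ext y
  simp only [Finset.mem_image, Finset.mem_filter, Prod.exists]
  constructor
  · rintro ⟨k, x, ⟨h1, h2⟩, rfl⟩
    cases k with
    | none => simp at h2
    | some m => exact ⟨m, x, (mem_fv_some A m x).1 h1, rfl⟩
  · rintro ⟨m, x, h, rfl⟩
    exact ⟨some m, x, ⟨(mem_fv_some A m x).2 h, rfl⟩, rfl⟩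

theorem fresh_union {S T : Finset ℕ} {N : ℕ} (h : T.sup id = N) :
    fresh (S ∪ T) = fresh (insert N S) := by
  unfold fresh
  rw [Finset.sup_union, Finset.sup_insert, h, sup_comm]; rfl

theorem fr_none {F : Type} (A : Fm2 F) (σ : Env) {T : Finset ℕ} {N : ℕ} (h : T.sup id = N) :
    fresh (sImg (fun x => (Tm.var (σ none x) : Tm F)) (fvo A) ∪ T) = fr N σ none (fv A) := by
  rw [fresh_union h, sImg_var (σ none)]
  unfold fr
  rw [image_none]

theorem fr_some {F : Type} (A : Fm2 F) (σ : Env) (n : ℕ) {T : Finset ℕ} {N : ℕ}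
    (h : T.sup id = N) :
    fresh ((fvs A).image (fun p => σ (some p.1) p.2) ∪ T) = fr N σ (some n) (fv A) := by
  rw [fresh_union h]
  unfold fr
  rw [image_some]

theorem fr_none0 {F : Type} (A : Fm2 F) (σ : Env) :
    fresh (sImg (fun x => (Tm.var (σ none x) : Tm F)) (fvo A)) = fr 0 σ none (fv A) := by
  rw [← fr_none A σ (T := ∅) (N := 0) rfl, Finset.union_empty]

theorem fr_some0 {F : Type} (A : Fm2 F) (σ : Env) (n : ℕ) :
    fresh ((fvs A).image (fun p => σ (some p.1) p.2)) = fr 0 σ (some n) (fv A) := by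
  rw [← fr_some A σ n (T := ∅) (N := 0) rfl, Finset.union_empty]

theorem eV_upd {F : Type} (σ : Env) (x y : ℕ) :
    Function.update (fun x => (Tm.var (σ none x) : Tm F)) x (.var y) =
      fun z => Tm.var (upd σ none x y none z) := by
  ext z; simp only [Function.update_apply, upd]; split_ifs <;> simp_all

theorem eR_upd1 (σ : Env) (x y : ℕ) :
    (fun n => σ (some n)) = fun n => upd σ none x y (some n) := by
  funext n z; simp [upd]

theorem eR_upd (σ : Env) (m x y : ℕ) :
    upd2 (fun n => σ (some n)) m x y = fun n => upd σ (some m) x y (some n) := by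
  funext n z; simp [upd, upd2]

theorem eV_upd2 {F : Type} (σ : Env) (m x y : ℕ) :
    (fun z => (Tm.var (σ none z) : Tm F)) = fun z => Tm.var (upd σ (some m) x y none z) := by
  funext z; simp [upd]

theorem rnSub_bS {F : Type} (A : Fm2 F) : ∀ σ : Env,
    rnSub (fun x => .var (σ none x)) (fun n => σ (some n)) A = bS 0 σ A := by
  induction A with
  | bot => intros; rfl
  | rel n X ts => intros; rfl
  | imp A B h1 h2 => intro σ; simp only [rnSub, bS, h1, h2]
  | conj A B h1 h2 => intro σ; simp only [rnSub, bS, h1, h2]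
  | disj A B h1 h2 => intro σ; simp only [rnSub, bS, h1, h2]
  | all1 x A ih =>
    intro σ; simp only [rnSub, bS]
    rw [fr_none0, eV_upd, eR_upd1 σ x (fr 0 σ none (fv A)), ih]
  | ex1 x A ih =>
    intro σ; simp only [rnSub, bS]
    rw [fr_none0, eV_upd, eR_upd1 σ x (fr 0 σ none (fv A)), ih]
  | all2 m x A ih =>
    intro σ; simp only [rnSub, bS]
    rw [fr_some0 A σ m, eR_upd, eV_upd2 σ m x (fr 0 σ (some m) (fv A)), ih]
  | ex2 m x A ih =>
    intro σ; simp only [rnSub, bS]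
    rw [fr_some0 A σ m, eR_upd, eV_upd2 σ m x (fr 0 σ (some m) (fv A)), ih]

theorem cSub_bS {F : Type} (n V : ℕ) (ps : List ℕ) (H : Fm2 F) (N : ℕ)
    (h1 : (fvo H).sup id = N) (h2 : ((fvs H).image Prod.snd).sup id = N) (A : Fm2 F) :
    ∀ σ : Env, (some n, V) ∉ occ A →
    cSub n V ps H (fun x => .var (σ none x)) (fun n => σ (some n)) A = bS N σ A := by
  induction A with
  | bot => intros; rfl
  | rel m X ts =>
    intro σ h
    have : ¬ (m = n ∧ X = V) := by rintro ⟨rfl, rfl⟩; simp [occ] at h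
    simp only [cSub, this, if_false, bS]
  | imp A B i1 i2 =>
    intro σ h; simp only [occ, Finset.mem_union, not_or] at h; simp only [cSub, bS, i1 σ h.1, i2 σ h.2]
  | conj A B i1 i2 =>
    intro σ h; simp only [occ, Finset.mem_union, not_or] at h; simp only [cSub, bS, i1 σ h.1, i2 σ h.2]
  | disj A B i1 i2 =>
    intro σ h; simp only [occ, Finset.mem_union, not_or] at h; simp only [cSub, bS, i1 σ h.1, i2 σ h.2]
  | all1 x A ih =>
    intro σ h; simp only [occ, Finset.mem_insert, not_or] at h; simp only [cSub, bS]
    rw [fr_none A σ h1, eV_upd, eR_upd1 σ x (fr N σ none (fv A)), ih _ h.2]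
  | ex1 x A ih =>
    intro σ h; simp only [occ, Finset.mem_insert, not_or] at h; simp only [cSub, bS]
    rw [fr_none A σ h1, eV_upd, eR_upd1 σ x (fr N σ none (fv A)), ih _ h.2]
  | all2 m x A ih =>
    intro σ h; simp only [occ, Finset.mem_insert, not_or] at h
    have : ¬ (m = n ∧ x = V) := by rintro ⟨rfl, rfl⟩; simp at h
    simp only [cSub, bS, this, if_false]
    rw [fr_some A σ m h2, eR_upd, eV_upd2 σ m x (fr N σ (some m) (fv A)), ih _ h.2]
  | ex2 m x A ih =>
    intro σ h; simp only [occ, Finset.mem_insert, not_or] at h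
    have : ¬ (m = n ∧ x = V) := by rintro ⟨rfl, rfl⟩; simp at h
    simp only [cSub, bS, this, if_false]
    rw [fr_some A σ m h2, eR_upd, eV_upd2 σ m x (fr N σ (some m) (fv A)), ih _ h.2]

theorem substS_bS {F : Type} (n V : ℕ) (ps : List ℕ) (H : Fm2 F) (N : ℕ)
    (h1 : (fvo H).sup id = N) (h2 : ((fvs H).image Prod.snd).sup id = N) (A : Fm2 F)
    (h : (some n, V) ∉ occ A) : substS n V ps H A = bS N (fun _ x => x) A :=
  cSub_bS n V ps H N h1 h2 A (fun _ x => x) h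

/-! ### Shape and replacement -/
def Sh {F : Type} (n X : ℕ) : Fm2 F → Prop
  | .bot => True
  | .rel m Y ts => m = n ∧ Y = X → ts.length = n
  | .imp A B => Sh n X A ∧ Sh n X B
  | .conj A B => Sh n X A ∧ Sh n X B
  | .disj A B => Sh n X A ∧ Sh n X B
  | .all1 _ A => Sh n X A ∧ (n = 0 → (n, X) ∉ fvs A)
  | .ex1 _ A => Sh n X A ∧ (n = 0 → (n, X) ∉ fvs A)
  | .all2 m Y A => (n, X) ∉ (fvs A).erase (m, Y)
  | .ex2 m Y A => (n, X) ∉ (fvs A).erase (m, Y)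

def rpl {F : Type} (n X V : ℕ) : Fm2 F → Fm2 F
  | .bot => .bot
  | .rel m Y ts => .rel m (if m = n ∧ Y = X then V else Y) ts
  | .imp A B => .imp (rpl n X V A) (rpl n X V B)
  | .conj A B => .conj (rpl n X V A) (rpl n X V B)
  | .disj A B => .disj (rpl n X V A) (rpl n X V B)
  | .all1 x A => .all1 x (rpl n X V A)
  | .ex1 x A => .ex1 x (rpl n X V A)
  | .all2 m Y A => .all2 m Y A
  | .ex2 m Y A => .ex2 m Y A

theorem fvo_rpl {F : Type} (n X V : ℕ) (A : Fm2 F) : fvo (rpl n X V A) = fvo A := by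
  induction A <;> simp_all [rpl, fvo]

theorem rpl_of_not_mem {F : Type} (n X V : ℕ) (A : Fm2 F) (h : (n, X) ∉ fvs A) :
    rpl n X V A = A := by
  induction A with
  | rel m Y ts =>
    have : ¬ (m = n ∧ Y = X) := by rintro ⟨rfl, rfl⟩; simp [fvs] at h
    simp [rpl, this]
  | _ => simp_all [rpl, fvs]

theorem sh_of_not_mem {F : Type} (n X : ℕ) (A : Fm2 F) (h : (n, X) ∉ fvs A) : Sh n X A := by
  induction A with
  | rel m Y ts => rintro ⟨rfl, rfl⟩; simp [fvs] at h
  | all1 x A ih => exact ⟨ih h, fun _ => h⟩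
  | ex1 x A ih => exact ⟨ih h, fun _ => h⟩
  | _ => simp_all [Sh, fvs]

theorem rpl_rpl {F : Type} (n X M V : ℕ) (A : Fm2 F) (h : (n, M) ∉ fvs A) (hs : Sh n X A) :
    rpl n M V (rpl n X M A) = rpl n X V A := by
  induction A with
  | rel m Y ts =>
    simp only [rpl]
    by_cases h1 : m = n ∧ Y = X
    · simp [h1]
    · have : ¬ (m = n ∧ Y = M) := by rintro ⟨rfl, rfl⟩; simp [fvs] at h
      simp [h1, this]
  | _ => simp_all [rpl, fvs, Sh]

theorem rpl_self {F : Type} (n X : ℕ) (A : Fm2 F) : rpl n X X A = A := by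
  induction A with
  | rel m Y ts =>
    simp only [rpl]
    split_ifs with h
    · rw [h.2]
    · rfl
  | _ => simp_all [rpl]

theorem not_mem_rpl {F : Type} (n X V : ℕ) (A : Fm2 F) (hV : V ≠ X) (hs : Sh n X A) :
    (n, X) ∉ fvs (rpl n X V A) := by
  induction A with
  | rel m Y ts =>
    simp only [rpl, fvs, Finset.mem_singleton, Prod.mk.injEq, not_and]
    rintro rfl
    split_ifs with h
    · exact hV.symm
    · intro e; exact h ⟨rfl, e.symm⟩
  | _ => simp_all [rpl, fvs, Sh]

theorem mem_fvs_rpl {F : Type} (n X V : ℕ) (A : Fm2 F) (p : ℕ × ℕ) (h : p ∈ fvs (rpl n X V A)) :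
    p = (n, V) ∨ p ∈ fvs A := by
  induction A with
  | rel m Y ts =>
    simp only [rpl, fvs, Finset.mem_singleton] at h ⊢
    split_ifs at h with h1
    · left; rw [h, h1.1]
    · right; exact h
  | imp A B h1 h2 => simp only [rpl, fvs, Finset.mem_union] at h ⊢; tauto
  | conj A B h1 h2 => simp only [rpl, fvs, Finset.mem_union] at h ⊢; tauto
  | disj A B h1 h2 => simp only [rpl, fvs, Finset.mem_union] at h ⊢; tauto
  | _ => simp_all [rpl, fvs]

theorem sh_rpl {F : Type} (n X V : ℕ) (A : Fm2 F) (hV : (n, V) ∉ fvs A) (hs : Sh n X A) :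
    Sh n V (rpl n X V A) := by
  induction A with
  | rel m Y ts =>
    simp only [Sh, rpl]
    simp only [Sh] at hs
    have : ¬ (m = n ∧ Y = V) := by rintro ⟨rfl, rfl⟩; simp [fvs] at hV
    split_ifs with h
    · intro _; exact hs h
    · intro h2; exact absurd h2 this
  | all1 x A ih =>
    simp only [Sh, rpl, fvs] at *
    refine ⟨ih hV hs.1, fun h => ?_⟩
    rw [rpl_of_not_mem n X V A (hs.2 h)]; exact hV
  | ex1 x A ih =>
    simp only [Sh, rpl, fvs] at *
    refine ⟨ih hV hs.1, fun h => ?_⟩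
    rw [rpl_of_not_mem n X V A (hs.2 h)]; exact hV
  | _ => simp_all [rpl, fvs, Sh]

theorem bS_rpl {F : Type} (n X V N : ℕ) (A : Fm2 F) : ∀ σ : Env,
    (∀ m Y, σ (some m) Y = Y) → bS N σ (rpl n X V A) = rpl n X V (bS N σ A) := by
  have key : ∀ (A : Fm2 F) σ, fr N σ none (fv (rpl n X V A)) = fr N σ none (fv A) := by
    intro A σ
    rw [← fr_none (N := N) (T := {N}) _ _ (by simp), ← fr_none (N := N) (T := {N}) _ _ (by simp),
      fvo_rpl]
  induction A with
  | bot => intros; rfl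
  | rel m Y ts => intro σ h; simp only [rpl, bS, h]
  | imp A B i1 i2 => intro σ h; simp only [rpl, bS, i1 σ h, i2 σ h]
  | conj A B i1 i2 => intro σ h; simp only [rpl, bS, i1 σ h, i2 σ h]
  | disj A B i1 i2 => intro σ h; simp only [rpl, bS, i1 σ h, i2 σ h]
  | all1 x A ih =>
    intro σ h; simp only [rpl, bS, key]; rw [ih]; intro m Y; simp [upd, h]
  | ex1 x A ih =>
    intro σ h; simp only [rpl, bS, key]; rw [ih]; intro m Y; simp [upd, h]
  | all2 m x A ih => intros; rfl
  | ex2 m x A ih => intros; rfl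

theorem mem_fvs_bS {F : Type} (N : ℕ) (A : Fm2 F) (σ : Env) (h : ∀ m Y, σ (some m) Y = Y)
    (p : ℕ × ℕ) : p ∈ fvs (bS N σ A) ↔ p ∈ fvs A := by
  obtain ⟨m, Y⟩ := p
  rw [← mem_fv_some, ← mem_fv_some, fv_bS]
  simp only [Finset.mem_image, actE, Prod.exists, Prod.mk.injEq]
  constructor
  · rintro ⟨k, z, h1, rfl, h2⟩; rw [h] at h2; rwa [← h2]
  · intro h1; exact ⟨_, _, h1, rfl, h _ _⟩

theorem sh_bS {F : Type} (n X N : ℕ) (A : Fm2 F) : ∀ σ : Env,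
    (∀ m Y, σ (some m) Y = Y) → (Sh n X (bS N σ A) ↔ Sh n X A) := by
  induction A with
  | bot => intros; rfl
  | rel m Y ts => intro σ h; simp only [Sh, bS, h, substTs_eq_map, List.length_map]
  | imp A B i1 i2 => intro σ h; simp only [Sh, bS, i1 σ h, i2 σ h]
  | conj A B i1 i2 => intro σ h; simp only [Sh, bS, i1 σ h, i2 σ h]
  | disj A B i1 i2 => intro σ h; simp only [Sh, bS, i1 σ h, i2 σ h]
  | all1 x A ih =>
    intro σ h; simp only [Sh, bS]
    rw [ih, mem_fvs_bS] <;> (intro m Y; simp [upd, h])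
  | ex1 x A ih =>
    intro σ h; simp only [Sh, bS]
    rw [ih, mem_fvs_bS] <;> (intro m Y; simp [upd, h])
  | all2 m x A ih =>
    intro σ h
    exact not_congr (mem_fvs_bS N (.all2 m x A) σ h (n, X))
  | ex2 m x A ih =>
    intro σ h
    exact not_congr (mem_fvs_bS N (.ex2 m x A) σ h (n, X))

theorem c_rpl {F : Type} (n X V : ℕ) (ps : List ℕ) (hl : ps.length = n) (hn : ps.Nodup)
    (hXV : V ≠ X) (A : Fm2 F) : ∀ (σ : ℕ → Tm F), (n, V) ∉ fvs A → Sh n X A →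
    cSub n V ps (.rel n X (ps.map .var)) σ ρid (rpl n X V A) =
      cSub n V ps (.rel n X (ps.map .var)) σ ρid A := by
  induction A with
  | bot => intros; rfl
  | rel m Y ts =>
    intro σ hV hs
    simp only [Sh] at hs
    have h2 : ¬ (m = n ∧ Y = V) := by rintro ⟨rfl, rfl⟩; simp [fvs] at hV
    by_cases h : m = n ∧ Y = X
    · have hlen := hs h
      obtain ⟨rfl, rfl⟩ := h
      simp only [rpl, cSub, true_and, and_self, if_true, rnSub, hXV.symm, if_false]
      rw [substTs_map_var, mkσ_map _ _ hn (by rw [substTs_eq_map, List.length_map]; omega)]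
    · simp [rpl, h]
  | imp A B i1 i2 =>
    intro σ hV hs; simp only [fvs, Finset.mem_union, not_or] at hV
    simp only [rpl, cSub, i1 σ hV.1 hs.1, i2 σ hV.2 hs.2]
  | conj A B i1 i2 =>
    intro σ hV hs; simp only [fvs, Finset.mem_union, not_or] at hV
    simp only [rpl, cSub, i1 σ hV.1 hs.1, i2 σ hV.2 hs.2]
  | disj A B i1 i2 =>
    intro σ hV hs; simp only [fvs, Finset.mem_union, not_or] at hV
    simp only [rpl, cSub, i1 σ hV.1 hs.1, i2 σ hV.2 hs.2]
  | all1 x A ih =>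
    intro σ hV hs
    simp only [rpl, cSub, fvo_rpl]
    rw [ih _ hV hs.1]
  | ex1 x A ih =>
    intro σ hV hs
    simp only [rpl, cSub, fvo_rpl]
    rw [ih _ hV hs.1]
  | all2 m x A ih => intros; rfl
  | ex2 m x A ih => intros; rfl

abbrev Pf {F : Type} (Γ : List (Fm2 F)) (A : Fm2 F) : Prop := Prf2 false Γ A

theorem pf_id {F : Type} (Γ : List (Fm2 F)) (A : Fm2 F) : Pf Γ (.imp A A) :=
  .impI (.ax (by simp))

theorem c_rpl0 {F : Type} (X V M : ℕ) (hXV : V ≠ X) (A : Fm2 F) :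
    ∀ (σ : ℕ → Tm F), (0, V) ∉ fvs A → Sh 0 X A → ∀ Γ,
    let H : Fm2 F := .conj (.rel 0 X []) (.imp (.rel 1 M [.var M]) (.rel 1 M [.var M]))
    Pf Γ (.imp (cSub 0 V [] H σ ρid (rpl 0 X V A)) (cSub 0 V [] H σ ρid A)) ∧
    Pf Γ (.imp (cSub 0 V [] H σ ρid A) (cSub 0 V [] H σ ρid (rpl 0 X V A))) := by
  intro σ hV hs Γ H
  induction A generalizing Γ with
  | bot => exact ⟨pf_id _ _, pf_id _ _⟩
  | rel m Y ts =>
    simp only [Sh] at hs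
    have h2 : ¬ (m = 0 ∧ Y = V) := by rintro ⟨rfl, rfl⟩; simp [fvs] at hV
    by_cases h : m = 0 ∧ Y = X
    · have hlen := hs h
      obtain ⟨rfl, rfl⟩ := h
      have : ts = [] := List.eq_nil_of_length_eq_zero hlen
      subst this
      simp only [rpl, cSub, true_and, and_self, if_true, rnSub, hXV.symm, if_false, H, substTs]
      refine ⟨.impI (.conjE1 (.ax (List.mem_cons_self ..))), .impI (.conjI (.ax ?_) (pf_id _ _))⟩
      exact List.mem_cons_self ..
    · simp only [rpl, h, if_false]
      exact ⟨pf_id _ _, pf_id _ _⟩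
  | imp A B i1 i2 =>
    simp only [fvs, Finset.mem_union, not_or] at hV
    have i1 := i1 hV.1 hs.1
    have i2 := i2 hV.2 hs.2
    simp only [rpl, cSub]
    exact ⟨.impI (.impI (.impE (i2 _).1 (.impE (.ax (by simp)) (.impE (i1 _).2 (.ax (by simp)))))),
      .impI (.impI (.impE (i2 _).2 (.impE (.ax (by simp)) (.impE (i1 _).1 (.ax (by simp))))))⟩
  | conj A B i1 i2 =>
    simp only [fvs, Finset.mem_union, not_or] at hV
    have i1 := i1 hV.1 hs.1
    have i2 := i2 hV.2 hs.2
    simp only [rpl, cSub]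
    exact ⟨.impI (.conjI (.impE (i1 _).1 (.conjE1 (.ax (List.mem_cons_self ..))))
        (.impE (i2 _).1 (.conjE2 (.ax (List.mem_cons_self ..))))),
      .impI (.conjI (.impE (i1 _).2 (.conjE1 (.ax (List.mem_cons_self ..))))
        (.impE (i2 _).2 (.conjE2 (.ax (List.mem_cons_self ..)))))⟩
  | disj A B i1 i2 =>
    simp only [fvs, Finset.mem_union, not_or] at hV
    have i1 := i1 hV.1 hs.1
    have i2 := i2 hV.2 hs.2
    simp only [rpl, cSub]
    exact ⟨.impI (.disjE (.ax (List.mem_cons_self ..))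
        (.disjI1 (.impE (i1 _).1 (.ax (List.mem_cons_self ..))))
        (.disjI2 (.impE (i2 _).1 (.ax (List.mem_cons_self ..))))),
      .impI (.disjE (.ax (List.mem_cons_self ..))
        (.disjI1 (.impE (i1 _).2 (.ax (List.mem_cons_self ..))))
        (.disjI2 (.impE (i2 _).2 (.ax (List.mem_cons_self ..)))))⟩
  | all1 x A ih =>
    rw [rpl_of_not_mem 0 X V (.all1 x A) (by simpa [fvs] using hs.2 rfl)]
    exact ⟨pf_id _ _, pf_id _ _⟩
  | ex1 x A ih =>
    rw [rpl_of_not_mem 0 X V (.ex1 x A) (by simpa [fvs] using hs.2 rfl)]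
    exact ⟨pf_id _ _, pf_id _ _⟩
  | all2 m x A ih => exact ⟨pf_id _ _, pf_id _ _⟩
  | ex2 m x A ih => exact ⟨pf_id _ _, pf_id _ _⟩

theorem stepGen {F : Type} {n X V : ℕ} {A' B : Fm2 F} (ps : List ℕ) (H : Fm2 F)
    (hl : ps.length = n) (hn : ps.Nodup) (h : Pf [] (.ex2 n X A')) (hV : (n, V) ∉ fvs A')
    (hX : (n, X) ∉ fvs B)
    (hc : ∀ Γ, Pf Γ (substS n V ps H A') → Pf Γ (substS n V ps H B)) :
    Pf [] (.ex2 n V B) := by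
  refine .ex2E h (.ex2I ps H hl hn (hc _ (.all2E ps H hl hn (.all2I (.ax ?_) ?_)))) ?_ ?_
  · simp
  · simpa using hV
  · simp [fvs, hX]
  · simp

theorem stepTriv {F : Type} {n X V : ℕ} {A : Fm2 F} (h : Pf [] (.ex2 n X A)) (hV : (n, V) ∉ fvs A)
    (hs : Sh n X A) (hXV : V ≠ X) : Pf [] (.ex2 n V (rpl n X V A)) := by
  refine stepGen (List.range n) (.rel n X ((List.range n).map .var)) (by simp) List.nodup_range h hV
    (not_mem_rpl n X V A hXV hs) ?_
  intro Γ h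
  unfold substS
  rwa [c_rpl n X V _ (by simp) List.nodup_range hXV A _ hV hs]

theorem stepBump {F : Type} {n N : ℕ} {A B : Fm2 F} (hN : n ≤ N) (h : Pf [] (.ex2 n N A))
    (hs' : Sh n N B)
    (e : bS N (fun _ x => x) A = bS N (fun _ x => x) B) (V : ℕ) (hV : (some n, V) ∉ occ A)
    (hV' : (some n, V) ∉ occ B) (hNV : V ≠ N) : Pf [] (.ex2 n V (rpl n N V B)) := by
  have hA : (n, V) ∉ fvs A := fun h => hV (fv_sub_occ _ ((mem_fv_some A n V).2 h))
  have hB : (n, V) ∉ fvs B := fun h => hV' (fv_sub_occ _ ((mem_fv_some B n V).2 h))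
  rcases Nat.eq_zero_or_pos n with rfl | hpos
  · set H : Fm2 F := .conj (.rel 0 N []) (.imp (.rel 1 N [.var N]) (.rel 1 N [.var N])) with hH
    refine stepGen [] H rfl List.nodup_nil h hA (not_mem_rpl _ _ _ _ hNV hs') ?_
    intro Γ h
    have h1 : (fvo H).sup id = N := by simp [hH, fvo, fvTs, fvT]
    have h2 : ((fvs H).image Prod.snd).sup id = N := by simp [hH, fvs]
    rw [substS_bS 0 V [] H N h1 h2 A hV, e, ← substS_bS 0 V [] H N h1 h2 B hV'] at h
    exact .impE (c_rpl0 N V N hNV B _ hB hs' Γ).2 h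
  · set ps := N :: List.range (n - 1) with hps
    have hl : ps.length = n := by simp [hps]; omega
    have hn : ps.Nodup := by
      rw [hps, List.nodup_cons]; exact ⟨by simp; omega, List.nodup_range⟩
    have hsup : ps.toFinset.sup id = N := by
      apply le_antisymm
      · apply Finset.sup_le
        intro b hb
        simp only [hps, List.mem_toFinset, List.mem_cons, List.mem_range] at hb
        simp only [id]; omega
      · exact Finset.le_sup (f := id) (by simp [hps])
    set H : Fm2 F := .rel n N (ps.map .var) with hH
    refine stepGen ps H hl hn h hA (not_mem_rpl _ _ _ _ hNV hs') ?_
    intro Γ h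
    have h1 : (fvo H).sup id = N := by rw [hH]; simp only [fvo]; rw [fvTs_map_var, hsup]
    have h2 : ((fvs H).image Prod.snd).sup id = N := by simp [hH, fvs]
    rw [substS_bS n V ps H N h1 h2 A hV, e, ← substS_bS n V ps H N h1 h2 B hV'] at h
    unfold substS at h ⊢
    rwa [hH, c_rpl n N V ps hl hn hNV B _ hB hs']

theorem stepLink {F : Type} {n X K : ℕ} {A B : Fm2 F} (hK : n ≤ K) (hX : X < K)
    (hA : ∀ p ∈ fvs A, p.2 < K) (hs : Sh n X A) (hr : Rel K (fun _ _ x => x) A B)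
    (h : Pf [] (.ex2 n X A)) : Sh n X B ∧ Pf [] (.ex2 n X B) := by
  obtain ⟨e, N, hN, eb⟩ := hr
  have hsB : Sh n X B := by
    rw [← sh_bS n X N B (fun _ x => x) (by simp), ← eb, sh_bS n X N A _ (by simp)]; exact hs
  refine ⟨hsB, ?_⟩
  have hNA : (n, N) ∉ fvs A := fun h => by have := hA _ h; simp at this; omega
  have hNB : (n, N) ∉ fvs B := by rw [← mem_fv_some, ← e, mem_fv_some]; exact hNA
  have t1 := stepTriv h hNA hs (by omega)
  obtain ⟨V, hV⟩ := Infinite.exists_notMem_finset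
    ((occ (rpl n X N A) ∪ occ (rpl n X N B) ∪ occ B).image Prod.snd ∪ {N, X})
  simp only [Finset.mem_union, Finset.mem_image, not_or, Finset.mem_insert,
      Finset.mem_singleton] at hV
  obtain ⟨hV1, hV2, hV3⟩ := hV
  have hVB : (n, V) ∉ fvs B := fun h => hV1 ⟨_, .inr (fv_sub_occ _ ((mem_fv_some B n V).2 h)), rfl⟩
  have t2 := stepBump (by omega) t1 (B := rpl n X N B) (sh_rpl n X N B hNB hsB)
    (by rw [bS_rpl _ _ _ _ _ _ (by simp), bS_rpl _ _ _ _ _ _ (by simp), eb]) V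
    (fun h => hV1 ⟨_, .inl (.inl h), rfl⟩) (fun h => hV1 ⟨_, .inl (.inr h), rfl⟩) hV2
  rw [rpl_rpl n X N V B hNB hsB] at t2
  have t3 := stepTriv t2 (V := X) (not_mem_rpl n X V B hV3 hsB) (sh_rpl n X V B hVB hsB)
    (Ne.symm hV3)
  rwa [rpl_rpl n X V X B hVB hsB, rpl_self] at t3

theorem stepEqv {F : Type} {n X : ℕ} {A B : Fm2 F} (he : Eqv A B) (hs : Sh n X A)
    (h : Pf [] (.ex2 n X A)) : Pf [] (.ex2 n X B) := by
  set K := n + X + (fvs A).sup Prod.snd + 1 with hK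
  have h1 := he K (fun _ _ x => x) ⟨0, fun _ _ _ _ => rfl⟩
  have hKA : ∀ p ∈ fvs A, p.2 < K := by
    intro p hp
    have : p.2 ≤ (fvs A).sup Prod.snd := Finset.le_sup (f := Prod.snd) hp
    omega
  clear_value K
  clear he
  let P : Fm2 F → Prop := fun A => (∀ p ∈ fvs A, p.2 < K) ∧ Sh n X A ∧ Pf [] (.ex2 n X A)
  have link : ∀ A B : Fm2 F, Rel K (fun _ _ x => x) A B → P A → P B := by
    rintro A B hr ⟨p1, p2, p3⟩
    refine ⟨?_, stepLink (by omega) (by omega) p1 p2 hr p3⟩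
    rintro ⟨m, Y⟩ hp
    rw [← mem_fv_some, ← hr.1, mem_fv_some] at hp
    exact p1 _ hp
  have key : P A ↔ P B := by
    clear hs h hKA hK
    induction h1 with
    | rel A B r =>
      refine ⟨link _ _ r, link _ _ ?_⟩
      obtain ⟨r1, N, r2, r3⟩ := r
      exact ⟨r1.symm, N, r2, r3.symm⟩
    | refl => exact Iff.rfl
    | symm _ _ _ ih => exact ih.symm
    | trans _ _ _ _ _ i1 i2 => exact i1.trans i2
  exact (key.1 ⟨hKA, hs, h⟩).2.2

end SOL
namespace SOL

def alls {F : Type} (xs : List ℕ) (B : Fm2 F) : Fm2 F := xs.foldr (fun x B => .all1 x B) B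

theorem alls_cons {F : Type} (x : ℕ) (xs : List ℕ) (B : Fm2 F) :
    alls (x :: xs) B = .all1 x (alls xs B) := rfl
theorem alls_nil {F : Type} (B : Fm2 F) : alls [] B = B := rfl

def Fx {F : Type} (n : ℕ) (xs : List ℕ) (G : Fm2 F) (X : ℕ) : Fm2 F :=
  alls xs (iff2 G (.rel n X (xs.map Tm.var)))

theorem mem_fvo_alls {F : Type} (xs : List ℕ) (B : Fm2 F) (w : ℕ) :
    w ∈ fvo (alls xs B) ↔ w ∈ fvo B ∧ w ∉ xs := by
  induction xs with
  | nil => simp [alls_nil]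
  | cons x xs ih => simp only [alls_cons, fvo, Finset.mem_erase, ih, List.mem_cons]; tauto

theorem fvs_alls {F : Type} (xs : List ℕ) (B : Fm2 F) : fvs (alls xs B) = fvs B := by
  induction xs with
  | nil => rfl
  | cons x xs ih => simp only [alls_cons, fvs, ih]

theorem prefixL {F : Type} (f : (ℕ → Tm F) → Fm2 F → Fm2 F) (S : Finset ℕ)
    (hf : ∀ σ x A, f σ (.all1 x A) = .all1 (fresh (sImg σ (fvo A) ∪ S))
      (f (Function.update σ x (.var (fresh (sImg σ (fvo A) ∪ S)))) A)) (B : Fm2 F) :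
    ∀ (xs : List ℕ) (σ : ℕ → ℕ), xs.Nodup → (∀ x ∈ xs, x ∈ fvo B) →
    ∃ (ys : List ℕ) (τ : ℕ → ℕ), f (fun x => .var (σ x)) (alls xs B) =
        alls ys (f (fun x => .var (τ x)) B) ∧ ys.Nodup ∧ xs.map τ = ys ∧
      (∀ w, w ∉ xs → τ w = σ w) ∧ ∀ y ∈ ys, y ∉ S ∧ ∀ w ∈ fvo B, w ∉ xs → y ≠ σ w := by
  intro xs
  induction xs with
  | nil => intro σ _ _; exact ⟨[], σ, rfl, List.nodup_nil, rfl, fun _ _ => rfl, by simp⟩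
  | cons x xs ih =>
    intro σ hn hx
    rw [List.nodup_cons] at hn
    set y := fresh (sImg (fun x => (Tm.var (σ x) : Tm F)) (fvo (alls xs B)) ∪ S) with hy
    obtain ⟨ys, τ, h1, h2, h3, h4, h5⟩ := ih (Function.update σ x y) hn.2
      (fun z hz => hx z (by simp [hz]))
    have hτx : τ x = y := by rw [h4 x hn.1]; simp
    have hyf := fresh_not_mem (sImg (fun x => (Tm.var (σ x) : Tm F)) (fvo (alls xs B)) ∪ S)
    rw [← hy, sImg_var σ, Finset.mem_union, not_or] at hyf
    refine ⟨y :: ys, τ, ?_, ?_, ?_, ?_, ?_⟩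
    · rw [alls_cons, hf, ← hy, update_var, h1, alls_cons]
    · rw [List.nodup_cons]
      refine ⟨fun hmem => ?_, h2⟩
      have := (h5 y hmem).2 x (hx x (by simp)) hn.1
      simp at this
    · simp [hτx, h3]
    · intro w hw
      simp only [List.mem_cons, not_or] at hw
      rw [h4 w hw.2, Function.update_of_ne hw.1]
    · intro z hz
      simp only [List.mem_cons] at hz
      rcases hz with rfl | hz
      · refine ⟨hyf.2, fun w hw hwx e => hyf.1 ?_⟩
        simp only [List.mem_cons, not_or] at hwx
        rw [e]
        exact Finset.mem_image_of_mem _ ((mem_fvo_alls xs B w).2 ⟨hw, hwx.2⟩)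
      · refine ⟨(h5 z hz).1, fun w hw hwx => ?_⟩
        simp only [List.mem_cons, not_or] at hwx
        have := (h5 z hz).2 w hw hwx.2
        rwa [Function.update_of_ne hwx.1] at this

theorem pf_alls {F : Type} (ys : List ℕ) (B : Fm2 F) (h : Pf [] B) : Pf [] (alls ys B) := by
  induction ys with
  | nil => exact h
  | cons y ys ih => exact .all1I ih (by simp)

theorem base1 {F : Type} (n X W : ℕ) (xs : List ℕ) (hl : xs.length = n) (hn : xs.Nodup)
    (hW : W ≠ X) : Pf [] (.ex2 n X (Fx n xs (.rel n W (xs.map Tm.var) : Fm2 F) X)) := by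
  refine .ex2I xs (.rel n W (xs.map Tm.var)) hl hn ?_
  obtain ⟨ys, τ, h1, -, -, -, -⟩ := prefixL
    (fun σ A => cSub n X xs (.rel n W (xs.map Tm.var) : Fm2 F) σ ρid A) _
    (fun σ x A => rfl) (iff2 (.rel n W (xs.map Tm.var)) (.rel n X (xs.map Tm.var))) xs id hn
    (by intro x hx; simp [iff2, fvo, fvTs_map_var, hx])
  unfold substS Fx
  change Pf [] (cSub n X xs (.rel n W (xs.map Tm.var) : Fm2 F) (fun x => .var (id x)) ρid _)
  rw [h1]
  apply pf_alls
  simp only [iff2, cSub, hW, true_and, and_self, if_true, if_false, rnSub, ρid]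
  simp only [substTs_map_var]
  rw [mkσ_map xs _ hn (by simp)]
  exact .conjI (pf_id _ _) (pf_id _ _)

theorem base2 {F : Type} (n : ℕ) (xs : List ℕ) (hl : xs.length = n) (hn : xs.Nodup)
    (G : Fm2 F) : ∃ (Y : ℕ) (ys : List ℕ), (n, Y) ∉ fvs G ∧ ys.Nodup ∧ ys.length = xs.length ∧
      (∀ y ∈ ys, y ∉ fvo G) ∧
      Pf [] (.ex2 n Y (Fx n ys (rnSub (mkσ xs (ys.map Tm.var)) ρid G) Y)) := by
  have h := Prf2.all2E xs G hl hn
    (.all2I (n := n) (X := 0) (base1 (F := F) n 1 0 xs hl hn (by simp)) (by simp))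
  unfold substS at h
  rw [cSub.eq_def] at h
  simp only [one_ne_zero, and_false, if_false] at h
  set Y := fresh (((fvs (Fx n xs (.rel n 0 (xs.map Tm.var) : Fm2 F) 1)).image
    fun p => ρid p.1 p.2) ∪ (fvs G).image Prod.snd) with hY
  have hYf := fresh_not_mem (((fvs (Fx n xs (.rel n 0 (xs.map Tm.var) : Fm2 F) 1)).image
    fun p => ρid p.1 p.2) ∪ (fvs G).image Prod.snd)
  rw [← hY, Finset.mem_union, not_or] at hYf
  obtain ⟨ys, τ, h1, h2, h3, -, h5⟩ := prefixL
    (fun σ A => cSub n 0 xs G σ (upd2 ρid n 1 Y) A) _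
    (fun σ x A => rfl) (iff2 (.rel n 0 (xs.map Tm.var)) (.rel n 1 (xs.map Tm.var))) xs id hn
    (by intro x hx; simp [iff2, fvo, fvTs_map_var, hx])
  refine ⟨Y, ys, fun h => hYf.2 (Finset.mem_image.2 ⟨_, h, rfl⟩), h2, by simp [← h3],
    fun y hy => (h5 y hy).1, ?_⟩
  have e : cSub n 0 xs G Tm.var (upd2 ρid n 1 Y) (Fx n xs (.rel n 0 (xs.map Tm.var)) 1) =
      Fx n ys (rnSub (mkσ xs (ys.map Tm.var)) ρid G) Y := by
    unfold Fx
    refine h1.trans ?_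
    simp only [iff2, cSub, true_and, and_self, if_true, if_false, one_ne_zero, and_false, upd2,
      substTs_map_var]
    have : xs.map (fun x => (Tm.var (τ x) : Tm F)) = ys.map Tm.var := by rw [← h3]; simp
    rw [this]
  rwa [e] at h

theorem exists_perm (S : Finset ℕ) : ∀ (xs ys : List ℕ), xs.Nodup → ys.Nodup →
    ys.length = xs.length → (∀ y ∈ ys, y ∉ S) →
    ∃ π : Equiv.Perm ℕ, xs.map π = ys ∧ ∀ w ∈ S, w ∉ xs → π w = w
  | [], [], _, _, _, _ => ⟨1, rfl, by simp⟩
  | [], _ :: _, _, _, h, _ => by simp at h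
  | _ :: _, [], _, _, h, _ => by simp at h
  | x :: xs, y :: ys, hx, hy, hl, hS => by
      rw [List.nodup_cons] at hx hy
      obtain ⟨π, h1, h2⟩ := exists_perm S xs ys hx.2 hy.2 (by simpa using hl)
        (fun z hz => hS z (by simp [hz]))
      refine ⟨Equiv.swap (π x) y * π, ?_, ?_⟩
      · simp only [List.map_cons, Equiv.Perm.mul_apply, Equiv.swap_apply_left]
        congr 1
        conv_rhs => rw [← h1]
        apply List.map_congr_left
        intro a ha
        apply Equiv.swap_apply_of_ne_of_ne
        · intro e; exact hx.1 (π.injective e ▸ ha)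
        · intro e; apply hy.1; rw [← h1, ← e]; exact List.mem_map_of_mem ha
      · intro w hw hwx
        simp only [List.mem_cons, not_or] at hwx
        rw [Equiv.Perm.mul_apply, h2 w hw hwx.2]
        apply Equiv.swap_apply_of_ne_of_ne
        · intro e
          rw [← h2 w hw hwx.2] at e
          exact hwx.1 (π.injective e)
        · rintro rfl; exact hS w (by simp) hw

def mk1 (m : ℕ → ℕ) : Env := fun k x => match k with
  | none => m x
  | some _ => x

theorem mk1_inj (m : ℕ → ℕ) (h : Function.Injective m) (k : Option ℕ) :
    Function.Injective (mk1 m k) := by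
  cases k with
  | none => exact h
  | some n => exact fun _ _ h => h

theorem Eqv_Fx {F : Type} (n : ℕ) (xs : List ℕ) (X : ℕ) {G G' : Fm2 F} (h : Eqv G G') :
    Eqv (Fx n xs G X) (Fx n xs G' X) := by
  unfold Fx
  generalize hr : (Fm2.rel n X (xs.map Tm.var) : Fm2 F) = r
  clear hr
  induction xs with
  | nil => exact .op .conj (.op .imp h (.refl _)) (.op .imp (.refl _) h)
  | cons x xs ih => exact .Q true none x ih

theorem ren_Fx {F : Type} (n : ℕ) (xs : List ℕ) (X : ℕ) (G : Fm2 F) (m : ℕ → ℕ) :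
    ren (mk1 m) (Fx n xs G X) = Fx n (xs.map m) (ren (mk1 m) G) X := by
  unfold Fx
  have e : ren (mk1 m) (Fm2.rel n X (xs.map Tm.var) : Fm2 F) =
      Fm2.rel n X ((xs.map m).map Tm.var) := by
    simp only [ren, substTs_map_var]; rw [List.map_map]; rfl
  rw [← e]
  clear e
  generalize (Fm2.rel n X (xs.map Tm.var) : Fm2 F) = r
  induction xs with
  | nil => rfl
  | cons x xs ih => simp only [List.map_cons, alls_cons, ren, ih]; rfl

theorem sh_Fx {F : Type} (n : ℕ) (xs : List ℕ) (X : ℕ) (G : Fm2 F) (hl : xs.length = n)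
    (h : (n, X) ∉ fvs G) : Sh n X (Fx n xs G X) := by
  unfold Fx
  have hG := sh_of_not_mem n X G h
  have hb : Sh n X (iff2 G (.rel n X (xs.map Tm.var))) := by
    simp [iff2, Sh, hG, hl]
  generalize iff2 G (.rel n X (xs.map Tm.var)) = B at hb
  rcases Nat.eq_zero_or_pos n with rfl | hp
  · rw [List.eq_nil_of_length_eq_zero hl]; exact hb
  · clear hl
    induction xs with
    | nil => exact hb
    | cons x xs ih => exact ⟨ih, fun h => by omega⟩

theorem fvs_Fx {F : Type} (n : ℕ) (xs : List ℕ) (X : ℕ) (G : Fm2 F) (p : ℕ × ℕ) :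
    p ∈ fvs (Fx n xs G X) ↔ p ∈ fvs G ∨ p = (n, X) := by
  unfold Fx
  rw [fvs_alls]
  simp only [iff2, fvs, Finset.mem_union, Finset.mem_singleton]; tauto

theorem rpl_Fx {F : Type} (n : ℕ) (xs : List ℕ) (X Y : ℕ) (G : Fm2 F) (h : (n, Y) ∉ fvs G) :
    rpl n Y X (Fx n xs G Y) = Fx n xs G X := by
  unfold Fx
  have e : rpl n Y X (iff2 G (.rel n Y (xs.map Tm.var))) = iff2 G (.rel n X (xs.map Tm.var)) := by
    simp [iff2, rpl, rpl_of_not_mem _ _ _ _ h]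
  rw [← e]
  clear e
  generalize iff2 G (.rel n Y (xs.map Tm.var)) = B
  induction xs with
  | nil => rfl
  | cons x xs ih => simp only [alls_cons, rpl, ih]

theorem SC {F : Type} (n X : ℕ) (xs : List ℕ) (G : Fm2 F) (hl : xs.length = n) (hn : xs.Nodup)
    (hX : (n, X) ∉ fvs G) : Pf [] (.ex2 n X (Fx n xs G X)) := by
  obtain ⟨Y, ys, hY, hyn, hyl, hyG, h⟩ := base2 n xs hl hn G
  obtain ⟨π, hπ, hπ2⟩ := exists_perm (fvo G) xs ys hn hyn hyl hyG
  have hm : ∃ m : ℕ → ℕ, ∀ z, mkσ xs (ys.map (Tm.var : ℕ → Tm F)) z = Tm.var (m z) := by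
    rw [← Classical.skolem (p := fun z y => mkσ xs (ys.map (Tm.var : ℕ → Tm F)) z = Tm.var y)]
    intro z
    by_cases hz : z ∈ xs
    · have := List.mem_map_of_mem (f := mkσ xs (ys.map (Tm.var : ℕ → Tm F))) hz
      rw [mkσ_map xs _ hn (by simp [hyl])] at this
      obtain ⟨y, _, hy⟩ := List.mem_map.1 this
      exact ⟨y, hy.symm⟩
    · exact ⟨z, mkσ_not_mem _ _ _ hz⟩
  obtain ⟨m, hm⟩ := hm
  have hmx : ∀ x ∈ xs, m x = π x := by
    have h1 := mkσ_map xs (ys.map (Tm.var : ℕ → Tm F)) hn (by simp [hyl])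
    rw [← hπ, List.map_map, List.map_inj_left] at h1
    intro x hx
    have := h1 x hx
    rw [← List.map_map, hπ, hm] at this
    simpa using this
  have hmo : ∀ x, x ∉ xs → m x = x := by
    intro x hx
    have := hm x
    rw [mkσ_not_mem _ _ _ hx] at this
    simpa using this.symm
  have hrn : rnSub (mkσ xs (ys.map Tm.var)) ρid G = bS 0 (mk1 m) G := by
    rw [← rnSub_bS, funext hm]; rfl
  rw [hrn] at h
  have e1 : Eqv (ren (mk1 π) G) (bS 0 (mk1 m) G) := by
    apply mainEqv _ _ _ (mk1_inj _ π.injective)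
    rintro ⟨k, w⟩ hw
    cases k with
    | some n => rfl
    | none =>
      simp only [mk1]
      by_cases hx : w ∈ xs
      · exact hmx w hx
      · rw [hmo w hx, hπ2 w ((mem_fv_none G w).1 hw) hx]
  have e2 : Eqv (ren (mk1 π) (Fx n xs G Y)) (bS 0 (fun _ x => x) (Fx n xs G Y)) := by
    apply mainEqv _ _ _ (mk1_inj _ π.injective)
    rintro ⟨k, w⟩ hw
    cases k with
    | some n => rfl
    | none =>
      have hw := (mem_fv_none _ w).1 hw
      unfold Fx at hw
      rw [mem_fvo_alls] at hw
      simp only [mk1]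
      rw [hπ2 w _ hw.2]
      have := hw.1
      simp only [iff2, fvo, fvTs_map_var, Finset.mem_union, List.mem_toFinset, hw.2] at this
      tauto
  have e3 : Eqv (ren (fun _ x => x) (Fx n xs G Y)) (bS 0 (fun _ x => x) (Fx n xs G Y)) :=
    mainEqv _ _ _ (fun _ _ _ h => h) (fun _ _ => rfl)
  rw [ren_id] at e3
  rw [ren_Fx, hπ] at e2
  have e4 := (Eqv_Fx n ys Y e1).symm.trans (e2.trans e3.symm)
  have h5 := stepEqv e4 (sh_Fx n ys Y _ (by omega) (by
    rw [mem_fvs_bS _ _ _ (by intro m Y; rfl)]; exact hY)) h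
  by_cases hXY : X = Y
  · rwa [hXY]
  · have h6 := stepTriv h5 (V := X) (by rw [fvs_Fx]; simp [hX, hXY])
      (sh_Fx n xs Y G hl hY) hXY
    rwa [rpl_Fx _ _ _ _ _ hY] at h6

end SOL
namespace SOL

def mkE (σ : ℕ → ℕ) (ρ : ℕ → ℕ → ℕ) : Env := fun k x => match k with
  | none => σ x
  | some n => ρ n x

theorem rnSub_mkE {F : Type} (σ : ℕ → ℕ) (ρ : ℕ → ℕ → ℕ) (A : Fm2 F) :
    rnSub (fun x => .var (σ x)) ρ A = bS 0 (mkE σ ρ) A := rnSub_bS A (mkE σ ρ)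

theorem mem_fvs_rnSub {F : Type} (σ : ℕ → ℕ) (ρ : ℕ → ℕ → ℕ) (A : Fm2 F) (m Y : ℕ) :
    (m, Y) ∈ fvs (rnSub (fun x => .var (σ x)) ρ A) ↔ ∃ Z, (m, Z) ∈ fvs A ∧ ρ m Z = Y := by
  rw [rnSub_mkE, ← mem_fv_some, fv_bS]
  simp only [Finset.mem_image, actE, Prod.exists, Prod.mk.injEq]
  constructor
  · rintro ⟨k, z, h, rfl, h2⟩; exact ⟨z, (mem_fv_some A m z).1 h, h2⟩
  · rintro ⟨z, h, h2⟩; exact ⟨some m, z, (mem_fv_some A m z).2 h, rfl, h2⟩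

theorem prefixR {F : Type} (ρ : ℕ → ℕ → ℕ) (B : Fm2 F) (xs : List ℕ) (σ : ℕ → ℕ) (hn : xs.Nodup)
    (hx : ∀ x ∈ xs, x ∈ fvo B) :
    ∃ (ys : List ℕ) (τ : ℕ → ℕ), rnSub (fun x => .var (σ x)) ρ (alls xs B) =
        alls ys (rnSub (fun x => .var (τ x)) ρ B) ∧ ys.Nodup ∧ xs.map τ = ys ∧
      (∀ w, w ∉ xs → τ w = σ w) ∧ ∀ y ∈ ys, ∀ w ∈ fvo B, w ∉ xs → y ≠ σ w := by
  obtain ⟨ys, τ, h1, h2, h3, h4, h5⟩ := prefixL (fun σ A => rnSub σ ρ A) ∅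
    (fun σ x A => by simp [rnSub]) B xs σ hn hx
  exact ⟨ys, τ, h1, h2, h3, h4, fun y hy => (h5 y hy).2⟩

theorem rnSub_Fx {F : Type} (σ : ℕ → ℕ) (ρ : ℕ → ℕ → ℕ) (n X : ℕ) (xs : List ℕ) (G : Fm2 F)
    (hn : xs.Nodup) : ∃ (ys : List ℕ) (τ : ℕ → ℕ), ys.Nodup ∧ ys.length = xs.length ∧
      rnSub (fun x => .var (σ x)) ρ (Fx n xs G X) =
        Fx n ys (rnSub (fun x => .var (τ x)) ρ G) (ρ n X) := by
  obtain ⟨ys, τ, h1, h2, h3, -, -⟩ := prefixR ρ (iff2 G (.rel n X (xs.map Tm.var))) xs σ hn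
    (by intro x hx; simp [iff2, fvo, fvTs_map_var, hx])
  refine ⟨ys, τ, h2, by simp [← h3], ?_⟩
  unfold Fx
  rw [h1]
  simp only [iff2, rnSub, substTs_map_var]
  have : xs.map (fun x => (Tm.var (τ x) : Tm F)) = ys.map Tm.var := by rw [← h3]; simp
  rw [this]

inductive SCF {F : Type} : Fm2 F → Prop
  | base (n X : ℕ) (xs : List ℕ) (G : Fm2 F) : xs.length = n → xs.Nodup → (n, X) ∉ fvs G →
      SCF (.ex2 n X (Fx n xs G X))
  | all1 (x : ℕ) {A : Fm2 F} : SCF A → SCF (.all1 x A)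
  | all2 (n X : ℕ) {A : Fm2 F} : SCF A → SCF (.all2 n X A)

theorem SCF.pf {F : Type} {A : Fm2 F} (h : SCF A) : Pf [] A := by
  induction h with
  | base n X xs G h1 h2 h3 => exact SC n X xs G h1 h2 h3
  | all1 x _ ih => exact .all1I ih (by simp)
  | all2 n X _ ih => exact .all2I ih (by simp)

theorem SCF.rnSub {F : Type} {A : Fm2 F} (h : SCF A) : ∀ (σ : ℕ → ℕ) (ρ : ℕ → ℕ → ℕ),
    SCF (rnSub (fun x => .var (σ x)) ρ A) := by
  induction h with
  | base n X xs G h1 h2 h3 =>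
    intro σ ρ
    simp only [SOL.rnSub]
    set Y := fresh ((fvs (Fx n xs G X)).image fun p => ρ p.1 p.2) with hY
    have hYf := fresh_not_mem ((fvs (Fx n xs G X)).image fun p => ρ p.1 p.2)
    rw [← hY] at hYf
    obtain ⟨ys, τ, h5, h6, h7⟩ := rnSub_Fx σ (upd2 ρ n X Y) n X xs G h2
    rw [h7]
    have e : upd2 ρ n X Y n X = Y := by simp [upd2]
    rw [e]
    refine .base _ _ _ _ (by omega) h5 ?_
    rw [mem_fvs_rnSub]
    rintro ⟨Z, hZ, hZ2⟩
    have hne : Z ≠ X := by rintro rfl; exact h3 hZ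
    simp only [upd2, true_and, hne, if_false] at hZ2
    exact hYf (Finset.mem_image.2 ⟨(n, Z), (fvs_Fx _ _ _ _ _).2 (.inl hZ), hZ2⟩)
  | all1 x _ ih =>
    intro σ ρ
    simp only [SOL.rnSub]
    rw [update_var]
    exact .all1 _ (ih _ _)
  | all2 n X _ ih =>
    intro σ ρ
    simp only [SOL.rnSub]
    exact .all2 _ _ (ih _ _)

theorem SCF.rename1 {F : Type} {A : Fm2 F} (h : SCF A) (r : ℕ → ℕ) : SCF (rename1 r A) :=
  h.rnSub r ρid
theorem SCF.rename2 {F : Type} {A : Fm2 F} (h : SCF A) (n X Y : ℕ) : SCF (rename2 n X Y A) :=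
  h.rnSub id (upd2 ρid n X Y)

theorem SC2_SCF {F : Type} {A : Fm2 F} (h : A ∈ (SC2 : Set (Fm2 F))) : SCF A := by
  obtain ⟨n, X, xs, chis, G, h1, h2, h3, -, -, rfl⟩ := h
  unfold scInstance
  induction chis with
  | nil => exact .base n X xs G h1 h2 h3
  | cons c chis ih =>
    rcases c with x | ⟨m, Y⟩
    · exact .all1 x ih
    · exact .all2 m Y ih

/-! ### Decoding -/

theorem mem_arities {F : Type} {φ : ℕ → ℕ → ℕ} {x : ℕ} {B : Fm2 F} {n : ℕ} :
    n ∈ arities φ x B ↔ ∃ X, (n, X) ∈ fvs B ∧ φ n X = x := by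
  simp [arities]

theorem mem_fvs_all2s {F : Type} (f : ℕ → ℕ) (l : List ℕ) (B : Fm2 F) (p : ℕ × ℕ) :
    p ∈ fvs (l.foldr (fun n C => .all2 n (f n) C) B) ↔ p ∈ fvs B ∧ ∀ n ∈ l, p ≠ (n, f n) := by
  induction l with
  | nil => simp
  | cons n l ih =>
    simp only [List.foldr_cons, fvs, Finset.mem_erase, ih, List.forall_mem_cons]; tauto

theorem mem_fvs_ex2s {F : Type} (f : ℕ → ℕ) (l : List ℕ) (B : Fm2 F) (p : ℕ × ℕ) :
    p ∈ fvs (l.foldr (fun n C => .ex2 n (f n) C) B) ↔ p ∈ fvs B ∧ ∀ n ∈ l, p ≠ (n, f n) := by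
  induction l with
  | nil => simp
  | cons n l ih =>
    simp only [List.foldr_cons, fvs, Finset.mem_erase, ih, List.forall_mem_cons]; tauto

theorem arities_aux {F : Type} {φ ψ : ℕ → ℕ → ℕ} (h : InvPair φ ψ) (x : ℕ) (B : Fm2 F)
    (p : ℕ × ℕ) : (p ∈ fvs B ∧ ∀ n ∈ arities φ x B, p ≠ (n, ψ n x)) ↔
      p ∈ fvs B ∧ φ p.1 p.2 ≠ x := by
  obtain ⟨m, Y⟩ := p
  constructor
  · rintro ⟨h1, h2⟩
    refine ⟨h1, fun e => h2 m (mem_arities.2 ⟨Y, h1, e⟩) ?_⟩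
    simp only at e
    rw [← e, (h m).1 Y]
  · rintro ⟨h1, h2⟩
    refine ⟨h1, fun n _ e => h2 ?_⟩
    simp only [Prod.mk.injEq] at e
    obtain ⟨rfl, rfl⟩ := e
    exact (h m).2 x

theorem mem_fvs_rev_all {F : Type} {φ ψ : ℕ → ℕ → ℕ} (h : InvPair φ ψ) (x : ℕ) (A : Fm1 F ℕ)
    (p : ℕ × ℕ) : p ∈ fvs (rev φ ψ (.all x A)) ↔ p ∈ fvs (rev φ ψ A) ∧ φ p.1 p.2 ≠ x := by
  rw [← arities_aux h, ← mem_fvs_all2s]; rfl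

theorem mem_fvs_rev_ex {F : Type} {φ ψ : ℕ → ℕ → ℕ} (h : InvPair φ ψ) (x : ℕ) (A : Fm1 F ℕ)
    (p : ℕ × ℕ) : p ∈ fvs (rev φ ψ (.ex x A)) ↔ p ∈ fvs (rev φ ψ A) ∧ φ p.1 p.2 ≠ x := by
  rw [← arities_aux h, ← mem_fvs_ex2s]; rfl

theorem mem_fvs_rename1 {F : Type} (r : ℕ → ℕ) (A : Fm2 F) (p : ℕ × ℕ) :
    p ∈ fvs (rename1 r A) ↔ p ∈ fvs A := by
  obtain ⟨m, Y⟩ := p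
  unfold rename1
  rw [mem_fvs_rnSub]
  simp [ρid]

theorem mem_fvs_rename2 {F : Type} (n X Z : ℕ) (A : Fm2 F) (m Y : ℕ) :
    (m, Y) ∈ fvs (rename2 n X Z A) ↔ ∃ W, (m, W) ∈ fvs A ∧ upd2 ρid n X Z m W = Y :=
  mem_fvs_rnSub id _ A m Y

theorem fresh_star {F : Type} {φ : ℕ → ℕ → ℕ} {A : Fm2 F} {p : ℕ × ℕ} (h : p ∈ fvs A) :
    φ p.1 p.2 ≠ fresh (starFv φ A) := by
  intro e
  apply fresh_not_mem (starFv φ A)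
  rw [← e]
  exact Finset.mem_union_right _ (Finset.mem_image.2 ⟨p, h, rfl⟩)

theorem fvs_aux1 {F : Type} {φ : ℕ → ℕ → ℕ} (A : Fm2 F) (r : ℕ → ℕ) (p : ℕ × ℕ) :
    (p ∈ fvs (rename1 r A) ∧ φ p.1 p.2 ≠ fresh (starFv φ A)) ↔ p ∈ fvs A := by
  rw [mem_fvs_rename1]
  exact ⟨fun h => h.1, fun h => ⟨h, fresh_star h⟩⟩

theorem fvs_aux2 {F : Type} {φ ψ : ℕ → ℕ → ℕ} (h : InvPair φ ψ) (A : Fm2 F) (n X : ℕ)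
    (p : ℕ × ℕ) :
    (p ∈ fvs (rename2 n X (ψ n (fresh (starFv φ A))) A) ∧ φ p.1 p.2 ≠ fresh (starFv φ A)) ↔
      p ∈ (fvs A).erase (n, X) := by
  obtain ⟨m, Y⟩ := p
  rw [mem_fvs_rename2, Finset.mem_erase]
  constructor
  · rintro ⟨⟨W, h1, h2⟩, h3⟩
    unfold upd2 at h2
    split_ifs at h2 with hc
    · obtain ⟨rfl, rfl⟩ := hc
      exact absurd (by simp only [← h2]; exact (h m).2 _) h3
    · simp only [ρid] at h2
      subst h2
      exact ⟨fun e => hc (by simpa using e), h1⟩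
  · rintro ⟨h1, h2⟩
    refine ⟨⟨Y, h2, ?_⟩, fresh_star h2⟩
    have : ¬ (m = n ∧ Y = X) := by simpa using h1
    simp [upd2, this, ρid]

theorem fvs_rev_star {F : Type} {φ ψ : ℕ → ℕ → ℕ} (h : InvPair φ ψ) : ∀ (k : ℕ) (A : Fm2 F),
    sz A ≤ k → fvs (rev φ ψ (star φ ψ A)) = fvs A := by
  intro k
  induction k with
  | zero => intro A hA; cases A <;> simp [sz] at hA
  | succ k ih =>
    intro A hA
    cases A with
    | bot => simp only [star, rev]
    | rel n X ts => simp only [star, rev, fvs]; rw [(h n).1 X]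
    | imp A B => simp only [sz] at hA; simp only [star, rev, fvs]; rw [ih A (by omega), ih B (by omega)]
    | conj A B => simp only [sz] at hA; simp only [star, rev, fvs]; rw [ih A (by omega), ih B (by omega)]
    | disj A B => simp only [sz] at hA; simp only [star, rev, fvs]; rw [ih A (by omega), ih B (by omega)]
    | all1 x A =>
      simp only [sz] at hA; rw [star]; ext p; rw [mem_fvs_rev_all h, ih, fvs_aux1]; · rfl
      · rw [rename1, sz_rnSub]; omega
    | ex1 x A =>
      simp only [sz] at hA; rw [star]; ext p; rw [mem_fvs_rev_ex h, ih, fvs_aux1]; · rfl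
      · rw [rename1, sz_rnSub]; omega
    | all2 n x A =>
      simp only [sz] at hA; rw [star]; ext p; rw [mem_fvs_rev_all h, ih, fvs_aux2 h]; · rfl
      · rw [rename2, sz_rnSub]; omega
    | ex2 n x A =>
      simp only [sz] at hA; rw [star]; ext p; rw [mem_fvs_rev_ex h, ih, fvs_aux2 h]; · rfl
      · rw [rename2, sz_rnSub]; omega

theorem starPrefix {F : Type} {φ ψ : ℕ → ℕ → ℕ} (h : InvPair φ ψ) (n X : ℕ) :
    ∀ (k : ℕ) (ys ws : List ℕ) (G : Fm2 F), ys.length = k → (ws ++ ys).Nodup → (n, X) ∉ fvs G →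
    ∃ (zs : List ℕ) (G' : Fm2 F), zs.length = k ∧ (ws ++ zs).Nodup ∧ (n, X) ∉ fvs G' ∧
      rev φ ψ (star φ ψ (alls ys (iff2 G (.rel n X ((ws ++ ys).map Tm.var))))) =
        alls zs (iff2 G' (.rel n X ((ws ++ zs).map Tm.var))) := by
  intro k
  induction k with
  | zero =>
    intro ys ws G hl hn hX
    rw [List.eq_nil_of_length_eq_zero hl] at hn ⊢
    refine ⟨[], rev φ ψ (star φ ψ G), rfl, hn, ?_, ?_⟩
    · rw [fvs_rev_star h _ G le_rfl]; exact hX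
    · simp only [alls_nil, iff2, star, rev]; rw [(h n).1 X]
  | succ k ih =>
    intro ys ws G hl hn hX
    obtain _ | ⟨y0, ys⟩ := ys
    · simp at hl
    have hn' := hn
    rw [List.nodup_append] at hn'
    obtain ⟨hws, hys, hdis⟩ := hn'
    rw [List.nodup_cons] at hys
    set body : Fm2 F := iff2 G (.rel n X ((ws ++ y0 :: ys).map Tm.var)) with hbody
    have hbv : ∀ z ∈ ws ++ y0 :: ys, z ∈ fvo body := by
      intro z hz
      simp only [hbody, iff2, fvo, fvTs_map_var, Finset.mem_union, List.mem_toFinset]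
      tauto
    rw [alls_cons, star]
    set v := fresh (starFv φ (alls ys body)) with hv
    obtain ⟨ys', τ, h1, h2, h3, h4, h5⟩ := prefixR ρid body ys (Function.update id y0 v) hys.2
      (fun x hx => hbv x (by simp [hx]))
    have hwne : ∀ w ∈ ws, w ≠ y0 ∧ w ∉ ys := fun w hw =>
      ⟨hdis w hw y0 (by simp), fun hy => hdis w hw w (by simp [hy]) rfl⟩
    have hτw : ∀ w ∈ ws, τ w = w := fun w hw => by
      rw [h4 w (hwne w hw).2, Function.update_of_ne (hwne w hw).1]; rfl
    have hτy : τ y0 = v := by rw [h4 y0 hys.1]; simp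
    have hmap : (ws ++ y0 :: ys).map τ = (ws ++ [v]) ++ ys' := by
      rw [List.map_append, List.map_cons, h3, hτy, List.map_congr_left hτw]; simp
    have hbody' : rename1 (Function.update id y0 v) (alls ys body) =
        alls ys' (iff2 (rnSub (fun x => .var (τ x)) ρid G)
          (.rel n X (((ws ++ [v]) ++ ys').map Tm.var))) := by
      unfold rename1
      rw [h1, ← hmap, hbody]
      simp only [iff2, rnSub, substTs_map_var, ρid]
      rw [List.map_map]; rfl
    have hvws : v ∉ ws := by
      intro hm
      apply fresh_not_mem (starFv φ (alls ys body))
      rw [← hv]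
      exact Finset.mem_union_left _ ((mem_fvo_alls ys body v).2 ⟨hbv v (by simp [hm]), (hwne v hm).2⟩)
    obtain ⟨zs, G', i1, i2, i3, i4⟩ := ih ys' (ws ++ [v]) (rnSub (fun x => .var (τ x)) ρid G)
      (by rw [← h3]; simpa using hl) (by
        rw [List.nodup_append]
        refine ⟨?_, h2, ?_⟩
        · rw [List.nodup_append]
          refine ⟨hws, by simp, ?_⟩
          rintro a ha b hb rfl
          simp only [List.mem_singleton] at hb
          exact hvws (hb ▸ ha)
        · rintro a ha b hb rfl
          simp only [List.mem_append, List.mem_singleton] at ha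
          rcases ha with ha | ha
          · have := h5 a hb a (hbv a (by simp [ha])) (hwne a ha).2
            rw [Function.update_of_ne (hwne a ha).1] at this
            exact this rfl
          · have := h5 a hb y0 (hbv y0 (by simp)) hys.1
            simp [ha] at this)
      (by rw [mem_fvs_rnSub]; rintro ⟨Z, hZ, rfl⟩; exact hX hZ)
    refine ⟨v :: zs, G', by simp [i1], by simpa using i2, i3, ?_⟩
    have har : arities φ v (rev φ ψ (star φ ψ (rename1 (Function.update id y0 v) (alls ys body))))
        = [] := by
      apply List.eq_nil_iff_forall_not_mem.2
      intro m hm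
      obtain ⟨Z, hZ, e⟩ := mem_arities.1 hm
      rw [fvs_rev_star h _ _ le_rfl, mem_fvs_rename1] at hZ
      exact fresh_star hZ e
    simp only [rev]
    rw [har, hbody', i4, alls_cons]
    simp

theorem pf_rev_star {F : Type} {φ ψ : ℕ → ℕ → ℕ} (h : InvPair φ ψ) : ∀ (k : ℕ) (A : Fm2 F),
    sz A ≤ k → SCF A → Pf [] (rev φ ψ (star φ ψ A)) := by
  have hall : ∀ (l : List ℕ) (f : ℕ → ℕ) (B : Fm2 F), Pf [] B →
      Pf [] (l.foldr (fun n C => .all2 n (f n) C) B) := by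
    intro l f B hB
    induction l with
    | nil => exact hB
    | cons n l ih => exact .all2I ih (by simp)
  intro k
  induction k with
  | zero => intro A hA; cases A <;> simp [sz] at hA
  | succ k ih =>
    intro A hA hs
    cases hs with
    | all1 x hs =>
      simp only [sz] at hA
      rw [star]
      exact .all1I (hall _ _ _ (ih _ (by rw [rename1, sz_rnSub]; omega) (hs.rename1 _))) (by simp)
    | all2 n X hs =>
      simp only [sz] at hA
      rw [star]
      exact .all1I (hall _ _ _ (ih _ (by rw [rename2, sz_rnSub]; omega) (hs.rename2 _ _ _)))
        (by simp)
    | base n X xs G h1 h2 h3 =>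
      rw [star]
      set y := fresh (starFv φ (Fx n xs G X)) with hy
      set Z := ψ n y with hZ
      have hφZ : φ n Z = y := (h n).2 y
      obtain ⟨ys, τ, j1, j2, j3⟩ := rnSub_Fx id (upd2 ρid n X Z) n X xs G h2
      have e : upd2 ρid n X Z n X = Z := by simp [upd2]
      rw [e] at j3
      obtain ⟨zs, G', i1, i2, i3, i4⟩ := starPrefix h n Z ys.length ys []
        (rnSub (fun x => .var (τ x)) (upd2 ρid n X Z) G) rfl (by simpa using j1) (by
          rw [mem_fvs_rnSub]
          rintro ⟨W, hW, hW2⟩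
          have hne : W ≠ X := by rintro rfl; exact h3 hW
          simp only [upd2, true_and, hne, if_false, ρid] at hW2
          rw [hW2] at hW
          exact fresh_star (φ := φ) ((fvs_Fx n xs X G (n, Z)).2 (.inl hW)) hφZ)
      have hB : rev φ ψ (star φ ψ (rename2 n X Z (Fx n xs G X))) = Fx n zs G' Z := by
        have : rename2 n X Z (Fx n xs G X) = _ := j3
        rw [this]
        exact i4
      have har : arities φ y (rev φ ψ (star φ ψ (rename2 n X Z (Fx n xs G X)))) = [n] := by
        unfold arities
        rw [fvs_rev_star h _ _ le_rfl]
        have : ((fvs (rename2 n X Z (Fx n xs G X))).filter fun p => φ p.1 p.2 = y).image Prod.fst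
            = {n} := by
          ext m
          simp only [Finset.mem_image, Finset.mem_filter, Prod.exists, Finset.mem_singleton]
          constructor
          · rintro ⟨m', Y, ⟨q1, q2⟩, rfl⟩
            by_contra hne
            obtain ⟨W, q3, q4⟩ := (mem_fvs_rename2 _ _ _ _ _ _).1 q1
            simp only [upd2, hne, false_and, if_false, ρid] at q4
            subst q4
            exact fresh_star q3 q2
          · rintro rfl
            refine ⟨m, Z, ⟨(mem_fvs_rename2 _ _ _ _ _ _).2 ⟨X, (fvs_Fx ..).2 (.inr rfl), e⟩, hφZ⟩,
              rfl⟩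
        rw [this, Finset.sort_singleton]
      simp only [rev]
      rw [har, hB]
      simp only [List.foldr_cons, List.foldr_nil]
      refine .ex1I (.var y) ?_
      have hs : SCF (Fm2.ex2 n Z (Fx n zs G' Z)) :=
        .base n Z zs G' (by omega) (by simpa using i2) i3
      have := (hs.rnSub id ρid).pf
      unfold substO
      rwa [Function.update_eq_self]

theorem iff_of_pf {F : Type} {A B : Fm2 F} (hA : Pf [] A) (hB : Pf [] B) : Pf [] (iff2 A B) :=
  .conjI (.impE (.impI (.impI (.ax (by simp)))) hB) (.impE (.impI (.impI (.ax (by simp)))) hA)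

theorem revSC1_equiv_SC2 {F : Type} (φ ψ : ℕ → ℕ → ℕ) (h : InvPair φ ψ) :
    (∀ A ∈ rev φ ψ '' (SC1 (F := F) φ ψ), ∃ B ∈ (SC2 : Set (Fm2 F)),
        Prf2 false [] (iff2 A B)) ∧
    (∀ B ∈ (SC2 : Set (Fm2 F)), ∃ A ∈ rev φ ψ '' (SC1 (F := F) φ ψ),
        Prf2 false [] (iff2 A B)) ∧
    (∀ A ∈ rev φ ψ '' (SC1 (F := F) φ ψ), Prf2 false [] A) := by
  have key : ∀ C ∈ (SC2 : Set (Fm2 F)), Prf2 false [] (rev φ ψ (star φ ψ C)) := fun C hC =>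
    pf_rev_star h _ C le_rfl (SC2_SCF hC)
  refine ⟨?_, ?_, ?_⟩
  · rintro _ ⟨_, ⟨C, hC, rfl⟩, rfl⟩
    exact ⟨C, hC, iff_of_pf (key C hC) (SC2_SCF hC).pf⟩
  · intro C hC
    exact ⟨_, ⟨_, ⟨C, hC, rfl⟩, rfl⟩, iff_of_pf (key C hC) (SC2_SCF hC).pf⟩
  · rintro _ ⟨_, ⟨C, hC, rfl⟩, rfl⟩
    exact key C hC

end SOL
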